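/- (Theorem: convergence rate of the sieve maximum likelihood estimator) Let α > 0, B > 0, m ≥ α, p ∈ ℕ₊, 1 < h̲ < h̄ < ∞, σ₀ > 0. Assume the data D_n = (x_i, y_i)_{i=1}^n are i.i.d. with density p₀(x,y) = φ_{σ₀}(y − f₀(x)) p_x(x), where f₀ ∈ 𝔠^{α,B}([0,1]^p) and p_x is a density on [0,1]^p bounded away from 0 and ∞. For K ∈ ℕ₊ define the sieve G_K = { Σ_{k ∈ [K]^p} Σ_{s : |s| ≤ m} ξ_{ks} ψ_{ks} : Kh ∈ [h̲, h̄], μ_k ∈ closure(X_K(k)), max_{k,s} |ξ_{ks}| ≤ B }. Set K_n = ⌈(n/log n)^{1/(2α+p)}⌉, and let f̂_{K_n} ∈ argmax_{f ∈ G_{K_n}} Σ_{i=1}^n log φ_{σ₀}(y_i − f(x_i)) (equivalently, a least-squares minimizer over G_{K_n}). Then there exists a constant M > 0 such that P₀^n( there exists a maximizer f̂_{K_n} with ‖f₀ − f̂_{K_n}‖_{L₂(P_x)} ≥ M (log n / n)^{α/(2α+p)} ) → 0 as n → ∞. -/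

import Mathlib

open MeasureTheory Filter Real Matrix
open scoped ENNReal NNReal BigOperators Classical

noncomputable section

namespace KMP

/-- The unit hypercube `[0,1]^p`. -/
def cube (p : ℕ) : Set (Fin p → ℝ) := {x | ∀ j, 0 ≤ x j ∧ x j ≤ 1}

/-- A boxed kernel: continuous, `[0,1]`-valued, supported on the closed unit sup-norm ball,
nonincreasing in the sup-norm (`‖·‖` on `Fin p → ℝ` is the sup-norm). -/
def IsBoxedKernel {p : ℕ} (φ : (Fin p → ℝ) → ℝ) : Prop :=
  Continuous φ ∧ (∀ u, 0 ≤ φ u ∧ φ u ≤ 1) ∧ (∀ u, 1 < ‖u‖ → φ u = 0) ∧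
    ∀ u v, ‖u‖ ≤ ‖v‖ → φ v ≤ φ u

/-- The block `X_K(k) = ∏_j ((k_j-1)/K, k_j/K]`; here `k j : Fin K` encodes `k_j - 1`. -/
def block {p : ℕ} (K : ℕ) (k : Fin p → Fin K) : Set (Fin p → ℝ) :=
  {x | ∀ j, ((k j : ℕ) : ℝ) / K < x j ∧ x j ≤ (((k j : ℕ) : ℝ) + 1) / K}

/-- The closure of the block `X_K(k)`. -/
def blockCl {p : ℕ} (K : ℕ) (k : Fin p → Fin K) : Set (Fin p → ℝ) :=
  {x | ∀ j, ((k j : ℕ) : ℝ) / K ≤ x j ∧ x j ≤ (((k j : ℕ) : ℝ) + 1) / K}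

/-- The center `μ_k^⋆` of the block `X_K(k)`. -/
def center {p : ℕ} (K : ℕ) (k : Fin p → Fin K) : Fin p → ℝ :=
  fun j => (2 * ((k j : ℕ) : ℝ) + 1) / (2 * K)

/-- Multi-indices `s ∈ {0,…,m}^p` with `|s| ≤ m`. -/
def mIdx (p m : ℕ) : Finset (Fin p → Fin (m + 1)) :=
  Finset.univ.filter fun s => (∑ j, (s j : ℕ)) ≤ m

/-- Degree `|s|` of a multi-index. -/
def deg {p m : ℕ} (s : Fin p → Fin (m + 1)) : ℕ := ∑ j, (s j : ℕ)

/-- Kernel mixture weight `w_k(x) = φ_h(x-μ_k) / ∑_l φ_h(x-μ_l)`. -/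
def weight {p : ℕ} (φ : (Fin p → ℝ) → ℝ) (K : ℕ) (h : ℝ)
    (μ : (Fin p → Fin K) → Fin p → ℝ) (k : Fin p → Fin K) (x : Fin p → ℝ) : ℝ :=
  φ (fun j => (x j - μ k j) / h) / ∑ l : Fin p → Fin K, φ (fun j => (x j - μ l j) / h)

/-- Monomial `(x - μ_k^⋆)^s`. -/
def mono {p : ℕ} (K m : ℕ) (k : Fin p → Fin K) (s : Fin p → Fin (m + 1))
    (x : Fin p → ℝ) : ℝ :=
  ∏ j, (x j - center K k j) ^ (s j : ℕ)

/-- A kernel mixture of polynomials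
`f(x) = ∑_k ∑_{|s| ≤ m} ξ_{ks} w_k(x) (x - μ_k^⋆)^s`. -/
def kmpFun {p : ℕ} (φ : (Fin p → ℝ) → ℝ) (K m : ℕ) (h : ℝ)
    (μ : (Fin p → Fin K) → Fin p → ℝ)
    (ξ : (Fin p → Fin K) → (Fin p → Fin (m + 1)) → ℝ) (x : Fin p → ℝ) : ℝ :=
  ∑ k : Fin p → Fin K, ∑ s ∈ mIdx p m, ξ k s * weight φ K h μ k x * mono K m k s x

/-- Partial derivative in the `j`-th coordinate direction. -/
def pderiv1 {p : ℕ} (j : Fin p) (f : (Fin p → ℝ) → ℝ) : (Fin p → ℝ) → ℝ :=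
  fun x => fderiv ℝ f x (Pi.single j 1)

/-- Mixed partial derivative `D^s f`. -/
def mderiv {p : ℕ} (s : Fin p → ℕ) (f : (Fin p → ℝ) → ℝ) : (Fin p → ℝ) → ℝ :=
  (List.finRange p).foldr (fun j g => (pderiv1 j)^[s j] g) f

/-- Degree of an `ℕ`-valued multi-index. -/
def degN {p : ℕ} (s : Fin p → ℕ) : ℕ := ∑ j, s j

/-- Euclidean norm on `Fin p → ℝ`. -/
def eucNorm {p : ℕ} (x : Fin p → ℝ) : ℝ := Real.sqrt (∑ j, (x j) ^ 2)

/-- `⌈α - 1⌉` (as a natural number; it is `0` when `α ≤ 1`). -/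
def hOrder (α : ℝ) : ℕ := ⌈α - 1⌉₊

/-- The α-Hölder class with envelope `B` on `[0,1]^p`: `⌈α-1⌉`-times continuously
differentiable, and the sum of the sup-norm bound on all derivatives of order `≤ ⌈α-1⌉`
and the Hölder constant of the derivatives of order `⌈α-1⌉` is at most `B`. -/
def IsHolder (p : ℕ) (α B : ℝ) (f : (Fin p → ℝ) → ℝ) : Prop :=
  ContDiff ℝ (hOrder α : ℕ∞) f ∧
    ∃ B₁ B₂ : ℝ, 0 ≤ B₁ ∧ 0 ≤ B₂ ∧ B₁ + B₂ ≤ B ∧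
      (∀ s : Fin p → ℕ, degN s ≤ hOrder α → ∀ x ∈ cube p, |mderiv s f x| ≤ B₁) ∧
      (∀ s : Fin p → ℕ, degN s = hOrder α → ∀ x ∈ cube p, ∀ y ∈ cube p, x ≠ y →
        |mderiv s f x - mderiv s f y| ≤ B₂ * eucNorm (x - y) ^ (α - (degN s : ℝ)))

/-- The `N(0, σ²)` density `φ_σ`. -/
def gaussD (σ t : ℝ) : ℝ := (σ * Real.sqrt (2 * π))⁻¹ * Real.exp (-t ^ 2 / (2 * σ ^ 2))

/-- Membership in the sieve `G_K` (centers in the closed blocks, bounded coefficients,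
bandwidth with `Kh ∈ [h̲, h̄]`). -/
def memSieve {p : ℕ} (φ : (Fin p → ℝ) → ℝ) (m : ℕ) (B hmin hmax : ℝ) (K : ℕ)
    (f : (Fin p → ℝ) → ℝ) : Prop :=
  ∃ h : ℝ, (K : ℝ) * h ∈ Set.Icc hmin hmax ∧
    ∃ μ : (Fin p → Fin K) → Fin p → ℝ, (∀ k, μ k ∈ blockCl K k) ∧
      ∃ ξ : (Fin p → Fin K) → (Fin p → Fin (m + 1)) → ℝ,
        (∀ k, ∀ s ∈ mIdx p m, |ξ k s| ≤ B) ∧ f = kmpFun φ K m h μ ξ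

/-- `K_n = ⌈(n / log n)^{1/(2α+p)}⌉`. -/
def Kn (α : ℝ) (p n : ℕ) : ℕ := ⌈((n : ℝ) / Real.log n) ^ (1 / (2 * α + (p : ℝ)))⌉₊

/-- The true data-generating distribution on `[0,1]^p × ℝ` with joint Lebesgue density
`p₀(x,y) = p_x(x) φ_{σ₀}(y - f₀(x))` (`p_x` supported on the cube). -/
def trueMeas (p : ℕ) (px f₀ : (Fin p → ℝ) → ℝ) (σ₀ : ℝ) :
    Measure ((Fin p → ℝ) × ℝ) :=
  volume.withDensity fun xy =>
    ENNReal.ofReal ((cube p).indicator px xy.1 * gaussD σ₀ (xy.2 - f₀ xy.1))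

/-!
The estimator is a least-squares fit. Comparing it with a good approximation of `f₀` in the sieve
shows that, with high probability, its empirical risk exceeds that of `f₀` by at most a multiple of
`n * ε_n ^ 2`.

*Approximation.* On each block the local Taylor polynomial of `f₀` is within `K ^ (-α)` of `f₀`, up
to a constant, and a weighted average of approximations is as good as the approximations: at any
point only blocks at distance `O(1 / K)` carry weight.

*Uniform deviation.* A function at squared distance `r` from `f₀` has an empirical risk as small as
required only with probability `exp (-c * n * r)`, by a Chernoff bound for Gaussian noise. A union
bound makes this uniform over the sieve, whose `O(K ^ p)` parameters lie on a grid of polynomially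
many values per coordinate, at the price of the factor `exp (O(K ^ p * log n))`. Since the kernel is
only continuous, moving a parameter by `δ` need not change the weights by `O(δ)` pointwise. But the
kernel is monotone in the sup-norm, so its oscillation over a window of width `η` has integral
`O(η)`; hence the brackets are small in `L¹`, which is enough for the exponential moments of the
loss over a bracket.

*Rate.* For `K = K_n` both `K ^ p * log n` and `n * K ^ (-2 * α)` are of order `n * ε_n ^ 2`.
-/

section PartialDerivatives

variable {p : ℕ} {f : (Fin p → ℝ) → ℝ} {n : ℕ}

lemma contDiff_pderiv1 (j : Fin p) (hf : ContDiff ℝ ((n + 1 : ℕ)) f) :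
    ContDiff ℝ (n : ℕ) (pderiv1 j f) :=
  (hf.fderiv_right (m := (n : ℕ)) (by norm_cast)).clm_apply contDiff_const

lemma pderiv1_pderiv1_apply (i j : Fin p) (hf : ContDiff ℝ (2 : ℕ) f) (x : Fin p → ℝ) :
    pderiv1 i (pderiv1 j f) x
      = fderiv ℝ (fderiv ℝ f) x (Pi.single i 1) (Pi.single j 1) := by
  have hf' : ContDiff ℝ (1 : ℕ) (fderiv ℝ f) := hf.fderiv_right (by norm_cast)
  have hd : DifferentiableAt ℝ (fderiv ℝ f) x := hf'.differentiable (by norm_num) x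
  unfold pderiv1
  rw [fderiv_clm_apply hd (differentiableAt_const _)]
  simp

lemma pderiv1_comm (i j : Fin p) (hf : ContDiff ℝ (2 : ℕ) f) :
    pderiv1 i (pderiv1 j f) = pderiv1 j (pderiv1 i f) := by
  funext x
  rw [pderiv1_pderiv1_apply i j hf, pderiv1_pderiv1_apply j i hf]
  exact (hf.contDiffAt.isSymmSndFDerivAt (by simp)) _ _

lemma contDiff_iterate_pderiv1 (j : Fin p) (k : ℕ) (hf : ContDiff ℝ ((n + k : ℕ)) f) :
    ContDiff ℝ (n : ℕ) ((pderiv1 j)^[k] f) := by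
  induction k generalizing f with
  | zero => simpa using hf
  | succ k ih =>
    rw [Function.iterate_succ_apply]
    exact ih (contDiff_pderiv1 j (by simpa [add_assoc] using hf))

lemma iterate_pderiv1_comm (i j : Fin p) (k : ℕ) (hf : ContDiff ℝ ((k + 1 : ℕ)) f) :
    (pderiv1 i)^[k] (pderiv1 j f) = pderiv1 j ((pderiv1 i)^[k] f) := by
  induction k generalizing f with
  | zero => rfl
  | succ k ih =>
    rw [Function.iterate_succ_apply, Function.iterate_succ_apply, ← ih (contDiff_pderiv1 i hf),
      pderiv1_comm i j (hf.of_le (by norm_cast; lia))]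

/-- The mixed partial derivative of multi-order `s` in which only the coordinates in the list `l`
are differentiated, so that statements about `mderiv` can be proved by induction on `l`. -/
def mderivAlong (l : List (Fin p)) (s : Fin p → ℕ) (f : (Fin p → ℝ) → ℝ) : (Fin p → ℝ) → ℝ :=
  l.foldr (fun j g => (pderiv1 j)^[s j] g) f

lemma mderivAlong_cons (i : Fin p) (l : List (Fin p)) (s : Fin p → ℕ) (f : (Fin p → ℝ) → ℝ) :
    mderivAlong (i :: l) s f = (pderiv1 i)^[s i] (mderivAlong l s f) := rfl

lemma contDiff_mderivAlong (l : List (Fin p)) (s : Fin p → ℕ)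
    (hf : ContDiff ℝ ((n + (l.map s).sum : ℕ)) f) : ContDiff ℝ (n : ℕ) (mderivAlong l s f) := by
  induction l generalizing n with
  | nil => simpa [mderivAlong] using hf
  | cons i l ih =>
    rw [mderivAlong_cons]
    exact contDiff_iterate_pderiv1 i _ (ih (by simpa [add_assoc] using hf))

lemma mderivAlong_pderiv1 (j : Fin p) (l : List (Fin p)) (s : Fin p → ℕ)
    (hf : ContDiff ℝ (((l.map s).sum + 1 : ℕ)) f) :
    mderivAlong l s (pderiv1 j f) = pderiv1 j (mderivAlong l s f) := by
  induction l with
  | nil => rfl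
  | cons i l ih =>
    rw [List.map_cons, List.sum_cons] at hf
    rw [mderivAlong_cons, mderivAlong_cons, ih (hf.of_le (by norm_cast; lia)),
      iterate_pderiv1_comm]
    exact contDiff_mderivAlong l s (hf.of_le (by norm_cast; lia))

lemma mderivAlong_congr {l : List (Fin p)} {s t : Fin p → ℕ} (h : ∀ j ∈ l, s j = t j) :
    mderivAlong l s f = mderivAlong l t f := by
  induction l with
  | nil => rfl
  | cons i l ih =>
    rw [mderivAlong_cons, mderivAlong_cons, ih fun j hj => h j (List.mem_cons_of_mem i hj),
      h i List.mem_cons_self]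

lemma mderivAlong_add_single {j : Fin p} {l : List (Fin p)} (s : Fin p → ℕ) (hl : l.Nodup)
    (hj : j ∈ l) (hf : ContDiff ℝ (((l.map s).sum + 1 : ℕ)) f) :
    mderivAlong l (s + Pi.single j 1) f = mderivAlong l s (pderiv1 j f) := by
  induction l with
  | nil => simp at hj
  | cons i l ih =>
    rw [List.nodup_cons] at hl
    rw [List.map_cons, List.sum_cons] at hf
    have hf' : ContDiff ℝ (((l.map s).sum + 1 : ℕ)) f := hf.of_le (by norm_cast; lia)
    rcases eq_or_ne i j with rfl | hij
    · have hs : ∀ k ∈ l, (s + Pi.single i 1 : Fin p → ℕ) k = s k := fun k hk => by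
        simp [ne_of_mem_of_not_mem hk hl.1]
      rw [mderivAlong_cons, mderivAlong_cons, mderivAlong_congr hs, mderivAlong_pderiv1 i l s hf']
      simp
    · rw [mderivAlong_cons, mderivAlong_cons,
        ih hl.2 (List.mem_of_ne_of_mem hij.symm hj) hf']
      simp [hij]

lemma mderiv_add_single (j : Fin p) (s : Fin p → ℕ) (hf : ContDiff ℝ ((degN s + 1 : ℕ)) f) :
    mderiv (s + Pi.single j 1) f = mderiv s (pderiv1 j f) := by
  refine mderivAlong_add_single s (List.nodup_finRange p) (List.mem_finRange j) ?_
  rwa [← List.ofFn_eq_map, List.sum_ofFn]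

lemma mderiv_zero (f : (Fin p → ℝ) → ℝ) : mderiv 0 f = f := by
  unfold mderiv
  induction List.finRange p with
  | nil => rfl
  | cons => simp

end PartialDerivatives

section Taylor

variable {p : ℕ} {f : (Fin p → ℝ) → ℝ} {r : ℕ}

lemma degN_add_single (s : Fin p → ℕ) (j : Fin p) : degN (s + Pi.single j 1) = degN s + 1 := by
  simp [degN, Finset.sum_add_distrib]

lemma apply_le_degN (s : Fin p → ℕ) (j : Fin p) : s j ≤ degN s :=
  Finset.single_le_sum (fun _ _ => Nat.zero_le _) (Finset.mem_univ j)

/-- The multi-indices of degree at most `r`, over which a Taylor polynomial is summed. -/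
def multiIndices (p r : ℕ) : Finset (Fin p → ℕ) :=
  (Fintype.piFinset fun _ => Finset.range (r + 1)).filter fun s => degN s ≤ r

lemma mem_multiIndices {s : Fin p → ℕ} : s ∈ multiIndices p r ↔ degN s ≤ r := by
  simp only [multiIndices, Finset.mem_filter, Fintype.mem_piFinset, Finset.mem_range,
    and_iff_right_iff_imp]
  exact fun h j => Nat.lt_succ_of_le ((apply_le_degN s j).trans h)

/-- The divided monomial `(x - a)^s / s!`, normalised so that differentiating in a coordinate
lowers the index by one. -/
def taylorMonomial (s : Fin p → ℕ) (a x : Fin p → ℝ) : ℝ :=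
  ∏ j, (x j - a j) ^ s j / (s j).factorial

lemma taylorMonomial_zero (a x : Fin p → ℝ) : taylorMonomial 0 a x = 1 := by
  simp [taylorMonomial]

lemma taylorMonomial_self {s : Fin p → ℕ} (hs : s ≠ 0) (a : Fin p → ℝ) :
    taylorMonomial s a a = 0 := by
  obtain ⟨j, hj⟩ := Function.ne_iff.1 hs
  exact Finset.prod_eq_zero (Finset.mem_univ j) (by simp [show s j ≠ 0 from hj])

lemma hasFDerivAt_taylorMonomial (s : Fin p → ℕ) (a x : Fin p → ℝ) :
    HasFDerivAt (taylorMonomial s a)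
      (∑ i, (∏ j ∈ Finset.univ.erase i, (x j - a j) ^ s j / (s j).factorial) •
        ((s i : ℝ) * (x i - a i) ^ (s i - 1) / (s i).factorial) •
          ContinuousLinearMap.proj (R := ℝ) (φ := fun _ : Fin p => ℝ) i) x := by
  refine HasFDerivAt.finsetProd fun i _ => ?_
  have h := (((hasFDerivAt_apply (𝕜 := ℝ) (F' := fun _ : Fin p => ℝ) i x).sub_const
    (a i)).pow (s i)).mul_const (((s i).factorial : ℝ)⁻¹)
  simpa only [div_eq_mul_inv, smul_smul, nsmul_eq_mul, mul_comm, mul_left_comm, mul_assoc] using h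

lemma pderiv1_taylorMonomial (s : Fin p → ℕ) (a x : Fin p → ℝ) (i : Fin p) :
    pderiv1 i (taylorMonomial s a) x =
      (∏ j ∈ Finset.univ.erase i, (x j - a j) ^ s j / (s j).factorial) *
        ((s i : ℝ) * (x i - a i) ^ (s i - 1) / (s i).factorial) := by
  rw [pderiv1, (hasFDerivAt_taylorMonomial s a x).fderiv]
  simp [Pi.single_apply]

lemma pderiv1_taylorMonomial_of_apply_eq_zero {s : Fin p → ℕ} {i : Fin p} (hs : s i = 0)
    (a x : Fin p → ℝ) : pderiv1 i (taylorMonomial s a) x = 0 := by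
  simp [pderiv1_taylorMonomial, hs]

lemma pderiv1_taylorMonomial_add_single (s : Fin p → ℕ) (a x : Fin p → ℝ) (i : Fin p) :
    pderiv1 i (taylorMonomial (s + Pi.single i 1) a) x = taylorMonomial s a x := by
  have hrest : ∀ j ∈ Finset.univ.erase i, (s + Pi.single i 1 : Fin p → ℕ) j = s j := fun j hj => by
    simp [Finset.ne_of_mem_erase hj]
  rw [pderiv1_taylorMonomial, taylorMonomial, ← Finset.prod_erase_mul _ _ (Finset.mem_univ i),
    Finset.prod_congr rfl fun j hj => by rw [hrest j hj]]
  congr 1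
  simp only [Pi.add_apply, Pi.single_eq_same, add_tsub_cancel_right, Nat.factorial_succ]
  push_cast
  field_simp

/-- The Taylor polynomial of degree `r` of `f` at `a`, evaluated at `x`. -/
def taylorPoly (r : ℕ) (f : (Fin p → ℝ) → ℝ) (a x : Fin p → ℝ) : ℝ :=
  ∑ s ∈ multiIndices p r, mderiv s f a * taylorMonomial s a x

lemma taylorPoly_self (r : ℕ) (f : (Fin p → ℝ) → ℝ) (a : Fin p → ℝ) :
    taylorPoly r f a a = f a := by
  rw [taylorPoly, Finset.sum_eq_single_of_mem 0 (mem_multiIndices.2 (by simp [degN]))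
    fun s _ hs => by rw [taylorMonomial_self hs, mul_zero], mderiv_zero, taylorMonomial_zero,
    mul_one]

lemma taylorPoly_zero (f : (Fin p → ℝ) → ℝ) (a x : Fin p → ℝ) : taylorPoly 0 f a x = f a := by
  have hzero : multiIndices p 0 = {0} := by
    ext s
    simp [mem_multiIndices, degN, funext_iff]
  rw [taylorPoly, hzero, Finset.sum_singleton, mderiv_zero, taylorMonomial_zero, mul_one]

lemma hasFDerivAt_taylorPoly (r : ℕ) (f : (Fin p → ℝ) → ℝ) (a x : Fin p → ℝ) :
    HasFDerivAt (taylorPoly r f a)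
      (∑ s ∈ multiIndices p r, mderiv s f a • fderiv ℝ (taylorMonomial s a) x) x :=
  HasFDerivAt.fun_sum fun s _ =>
    (hasFDerivAt_taylorMonomial s a x).differentiableAt.hasFDerivAt.const_mul _

lemma pderiv1_taylorPoly (hf : ContDiff ℝ ((r + 1 : ℕ)) f) (a x : Fin p → ℝ) (i : Fin p) :
    pderiv1 i (taylorPoly (r + 1) f a) x = taylorPoly r (pderiv1 i f) a x := by
  have hsum : pderiv1 i (taylorPoly (r + 1) f a) x =
      ∑ s ∈ multiIndices p (r + 1), mderiv s f a * pderiv1 i (taylorMonomial s a) x := by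
    rw [pderiv1, (hasFDerivAt_taylorPoly _ f a x).fderiv, _root_.sum_apply]
    rfl
  rw [hsum, taylorPoly]
  symm
  refine Finset.sum_of_injOn (fun s => s + Pi.single i 1) (add_left_injective _).injOn
    (fun s hs => ?_) (fun s hs hnot => ?_) fun s hs => ?_
  · simpa [mem_multiIndices, degN_add_single] using hs
  · have hsi : s i = 0 := by
      by_contra hsi
      have hle : Pi.single i 1 ≤ s := fun j => by
        rcases eq_or_ne j i with rfl | hj
        · simpa using Nat.one_le_iff_ne_zero.2 hsi
        · simp [hj]
      have hs' := tsub_add_cancel_of_le hle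
      refine hnot ⟨s - Pi.single i 1, ?_, hs'⟩
      rw [mem_multiIndices, ← hs', degN_add_single] at hs
      exact mem_multiIndices.2 (Nat.le_of_succ_le_succ hs)
    rw [pderiv1_taylorMonomial_of_apply_eq_zero hsi, mul_zero]
  · rw [mem_multiIndices] at hs
    rw [pderiv1_taylorMonomial_add_single,
      mderiv_add_single i s (hf.of_le (by norm_cast; lia))]

lemma norm_le_card_mul_of_apply_single_le {L : (Fin p → ℝ) →L[ℝ] ℝ} {C : ℝ} (hC : 0 ≤ C)
    (h : ∀ i, |L (Pi.single i 1)| ≤ C) : ‖L‖ ≤ p * C := by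
  refine L.opNorm_le_bound (by positivity) fun x => ?_
  calc ‖L x‖ = ‖∑ i, x i * L (Pi.single i 1)‖ := by
        nth_rw 1 [← Finset.univ_sum_single x]
        simp only [map_sum, ← smul_eq_mul, ← map_smul, ← Pi.single_smul]
        simp only [smul_eq_mul, mul_one]
    _ ≤ ∑ i, ‖x i * L (Pi.single i 1)‖ := norm_sum_le _ _
    _ ≤ ∑ _i : Fin p, ‖x‖ * C := Finset.sum_le_sum fun i _ => by
        rw [norm_mul]
        exact mul_le_mul (norm_le_pi_norm x i) (h i) (norm_nonneg _) (norm_nonneg _)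
    _ = p * C * ‖x‖ := by
        rw [Finset.sum_const, Finset.card_univ, Fintype.card_fin, nsmul_eq_mul]
        ring

theorem abs_sub_taylorPoly_le {S : Set (Fin p → ℝ)} (hS : Convex ℝ S) {L β : ℝ} (hL : 0 ≤ L)
    (hβ : 0 ≤ β) (hf : ContDiff ℝ (r : ℕ) f)
    (hHolder : ∀ s, degN s = r → ∀ x ∈ S, ∀ y ∈ S,
      |mderiv s f x - mderiv s f y| ≤ L * ‖x - y‖ ^ β)
    {a x : Fin p → ℝ} (ha : a ∈ S) (hx : x ∈ S) :
    |f x - taylorPoly r f a x| ≤ p ^ r * L * ‖x - a‖ ^ (r + β) := by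
  induction r generalizing f x with
  | zero => simpa [taylorPoly_zero, mderiv_zero] using hHolder 0 (by simp [degN]) x hx a ha
  | succ r ih =>
    set R := fun y => f y - taylorPoly (r + 1) f a y with hR
    have hfd : Differentiable ℝ f := hf.differentiable (by simp)
    have hTd : Differentiable ℝ (taylorPoly (r + 1) f a) := fun y =>
      (hasFDerivAt_taylorPoly _ f a y).differentiableAt
    have hderiv : ∀ y ∈ segment ℝ a x,
        ‖fderiv ℝ R y‖ ≤ p * (p ^ r * L * ‖x - a‖ ^ (r + β)) := fun y hy => by
      refine norm_le_card_mul_of_apply_single_le (by positivity) fun i => ?_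
      have hRi : fderiv ℝ R y (Pi.single i 1) = pderiv1 i f y - taylorPoly r (pderiv1 i f) a y := by
        rw [hR, fderiv_fun_sub (hfd y) (hTd y), _root_.sub_apply, ← pderiv1_taylorPoly hf]
        rfl
      have hya : ‖y - a‖ ≤ ‖x - a‖ := by
        obtain ⟨t, ht, rfl⟩ := (segment_eq_image' ℝ a x) ▸ hy
        simpa only [add_sub_cancel_left, norm_smul, Real.norm_eq_abs, abs_of_nonneg ht.1] using
          mul_le_of_le_one_left (norm_nonneg _) ht.2
      rw [hRi]
      refine (ih (contDiff_pderiv1 i hf) (fun s hs u hu v hv => ?_)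
        (hS.segment_subset ha hx hy)).trans (by gcongr)
      rw [← mderiv_add_single i s (hf.of_le (by norm_cast; lia))]
      exact hHolder _ (by rw [degN_add_single, hs]) u hu v hv
    have hmean := (convex_segment a x).norm_image_sub_le_of_norm_fderiv_le
      (fun y _ => (hfd y).sub (hTd y)) hderiv (left_mem_segment ℝ a x) (right_mem_segment ℝ a x)
    simp only [Pi.sub_apply, taylorPoly_self, sub_self, sub_zero, Real.norm_eq_abs] at hmean
    refine hmean.trans (le_of_eq ?_)
    rcases eq_or_ne ‖x - a‖ 0 with h0 | h0
    · rw [h0, mul_zero, zero_rpow (by positivity), mul_zero]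
    · rw [Nat.cast_succ, add_right_comm, rpow_add_one h0]
      ring

end Taylor

section Chernoff

variable {E : Type*} [MeasurableSpace E] (P : Measure E) [IsProbabilityMeasure P] (n : ℕ)

lemma lintegral_pi_prod_eq_pow {F : E → ℝ≥0∞} (hF : Measurable F) :
    ∫⁻ d, ∏ i, F (d i) ∂Measure.pi (fun _ : Fin n => P) = (∫⁻ e, F e ∂P) ^ n := by
  have hindep : ProbabilityTheory.iIndepFun (fun i (d : Fin n → E) => F (d i))
      (Measure.pi fun _ => P) :=
    ProbabilityTheory.iIndepFun_pi (X := fun _ => F) fun _ => hF.aemeasurable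
  rw [ProbabilityTheory.lintegral_prod_eq_prod_lintegral_of_indepFun Finset.univ _ hindep
    fun i => hF.comp (measurable_pi_apply i)]
  simp [(measurePreserving_eval (fun _ : Fin n => P) _).lintegral_comp hF]

lemma measure_pi_le_sum_le_exp_mul_pow {W : E → ℝ} (hW : Measurable W) (s : ℝ) :
    Measure.pi (fun _ : Fin n => P) {d | s ≤ ∑ i, W (d i)} ≤
      ENNReal.ofReal (exp (-s)) * (∫⁻ e, ENNReal.ofReal (exp (W e)) ∂P) ^ n := by
  have hF : Measurable fun e => ENNReal.ofReal (exp (W e)) := by fun_prop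
  have hset : {d : Fin n → E | s ≤ ∑ i, W (d i)} ⊆
      {d | ENNReal.ofReal (exp s) ≤ ∏ i, ENNReal.ofReal (exp (W (d i)))} := fun d hd => by
    rw [Set.mem_ofPred_eq, ← ENNReal.ofReal_prod_of_nonneg fun i _ => (exp_pos _).le, ← exp_sum]
    exact ENNReal.ofReal_le_ofReal (exp_le_exp.2 hd)
  have hmarkov := meas_ge_le_lintegral_div (μ := Measure.pi fun _ : Fin n => P)
    (f := fun d => ∏ i, ENNReal.ofReal (exp (W (d i))))
    (Finset.measurable_fun_prod _ fun i _ => hF.comp (measurable_pi_apply i)).aemeasurable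
    (ENNReal.ofReal_pos.2 (exp_pos s)).ne' ENNReal.ofReal_ne_top
  rw [lintegral_pi_prod_eq_pow P n hF] at hmarkov
  refine (measure_mono hset).trans (hmarkov.trans_eq ?_)
  rw [ENNReal.div_eq_inv_mul, ← ENNReal.ofReal_inv_of_pos (exp_pos s), ← Real.exp_neg]

end Chernoff

section GaussianExponentialMoments

open ProbabilityTheory

variable {v : ℝ≥0} {l A g D : ℝ}

lemma integrable_exp_add_mul_gaussianReal (v : ℝ≥0) (a b : ℝ) :
    Integrable (fun z => exp (a + b * z)) (gaussianReal 0 v) := by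
  simpa only [exp_add] using
    (integrable_exp_mul_gaussianReal (μ := 0) (v := v) b).const_mul (exp a)

lemma integral_exp_add_mul_gaussianReal (v : ℝ≥0) (a b : ℝ) :
    ∫ z, exp (a + b * z) ∂gaussianReal 0 v = exp (a + v * b ^ 2 / 2) := by
  have hmgf : ∫ z, exp (b * z) ∂gaussianReal 0 v = exp (v * b ^ 2 / 2) := by
    simpa [mgf] using congrFun (mgf_fun_id_gaussianReal (μ := 0) (v := v)) b
  simp only [exp_add, integral_const_mul, hmgf]

/-- The constant `c` in `exp (-l g²) ≤ 1 - c g²`, valid for `|g| ≤ A`. -/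
def lossCurvature (l A : ℝ) : ℝ := l / (1 + l * A ^ 2)

/-- The price, per unit of `L¹`-radius, of replacing a function by the center of its bracket in the
exponential moment of the excess loss. -/
def bracketCost (l A : ℝ) : ℝ := 2 / A * exp (5 * l * A ^ 2)

lemma exp_neg_mul_sq_le (hl : 0 < l) (hg : |g| ≤ A) :
    exp (-(l * g ^ 2)) ≤ 1 - lossCurvature l A * g ^ 2 := by
  have hgA : g ^ 2 ≤ A ^ 2 := sq_le_sq' (abs_le.1 hg).1 (abs_le.1 hg).2
  calc exp (-(l * g ^ 2)) ≤ 1 / (1 + l * g ^ 2) := by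
        rw [Real.exp_neg, ← one_div]
        exact one_div_le_one_div_of_le (by positivity) (by linarith [add_one_le_exp (l * g ^ 2)])
    _ = 1 - l * g ^ 2 / (1 + l * g ^ 2) := by field_simp; ring
    _ ≤ 1 - l * g ^ 2 / (1 + l * A ^ 2) := by gcongr
    _ = 1 - lossCurvature l A * g ^ 2 := by rw [lossCurvature]; ring

lemma exp_abs_le (z : ℝ) : exp |z| ≤ exp z + exp (-z) := by
  rcases abs_choice z with h | h <;> rw [h] <;> linarith [exp_pos z, exp_pos (-z)]

lemma exp_add_le_half (u w : ℝ) : exp (u + w) ≤ (exp (2 * u) + exp (2 * w)) / 2 := by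
  rw [exp_add, two_mul, two_mul, exp_add, exp_add]
  nlinarith [sq_nonneg (exp u - exp w)]

lemma exp_mul_le_of_le_one {θ q : ℝ} (hθ : 0 ≤ θ) (hθ' : θ ≤ 1) : exp (θ * q) ≤ 1 + θ * exp q := by
  have hconv := convexOn_exp.2 (Set.mem_univ 0) (Set.mem_univ q) (sub_nonneg.2 hθ') hθ (by ring)
  simp only [smul_eq_mul, mul_zero, zero_add, exp_zero, mul_one] at hconv
  linarith

lemma exp_bracket_le (hl : 0 < l) (hA : 0 < A) (hD : 0 ≤ D) (hDA : D ≤ A) (z : ℝ) :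
    exp (2 * (l * D * (2 * A + 2 * |z|))) ≤
      1 + D / A * exp (4 * l * A ^ 2) * (exp (4 * l * A * z) + exp (-(4 * l * A * z))) := by
  have hscale : 2 * (l * D * (2 * A + 2 * |z|)) =
      D / A * (4 * l * A ^ 2 + |4 * l * A * z|) := by
    rw [abs_mul, abs_of_pos (show 0 < 4 * l * A by positivity)]
    field_simp
    ring
  calc exp (2 * (l * D * (2 * A + 2 * |z|)))
      ≤ 1 + D / A * exp (4 * l * A ^ 2 + |4 * l * A * z|) := by
        rw [hscale]
        exact exp_mul_le_of_le_one (by positivity) ((div_le_one hA).2 hDA)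
    _ = 1 + D / A * exp (4 * l * A ^ 2) * exp |4 * l * A * z| := by rw [exp_add]; ring
    _ ≤ _ := by gcongr; exact exp_abs_le _

/-- Splits off the bracketing term by AM-GM, so that each exponential moment can be computed. -/
lemma exp_neg_excess_add_bracket_le (hl : 0 < l) (hA : 0 < A) (hD : 0 ≤ D) (hDA : D ≤ A) (z : ℝ) :
    exp (-(l * (g ^ 2 - 2 * z * g)) + l * D * (2 * A + 2 * |z|))
      ≤ (exp (-(2 * l * g ^ 2) + 4 * l * g * z) +
        (1 + D / A * exp (4 * l * A ^ 2) * (exp (4 * l * A * z) + exp (-(4 * l * A * z))))) / 2 :=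
  by
  refine (exp_add_le_half _ _).trans ?_
  rw [show 2 * -(l * (g ^ 2 - 2 * z * g)) = -(2 * l * g ^ 2) + 4 * l * g * z by ring]
  gcongr
  exact exp_bracket_le hl hA hD hDA z

lemma lintegral_exp_excess (hlv : 8 * l * v = 1) (g : ℝ) :
    ∫⁻ z, ENNReal.ofReal (exp (l * (g ^ 2 - 2 * z * g))) ∂gaussianReal 0 v
      = ENNReal.ofReal (exp (5 / 4 * l * g ^ 2)) := by
  have hexp : ∀ z, l * (g ^ 2 - 2 * z * g) = l * g ^ 2 + (-(2 * l * g)) * z := fun z => by ring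
  simp only [hexp]
  rw [← ofReal_integral_eq_lintegral_ofReal (integrable_exp_add_mul_gaussianReal v _ _)
    (ae_of_all _ fun z => (exp_pos _).le), integral_exp_add_mul_gaussianReal]
  congr 2
  linear_combination l * g ^ 2 / 4 * hlv

lemma hasMean_exp_bracket_majorant (hlv : 8 * l * v = 1) (A g κ : ℝ) :
    Integrable (fun z => (exp (-(2 * l * g ^ 2) + 4 * l * g * z) +
        (1 + κ * (exp (4 * l * A * z) + exp (-(4 * l * A * z))))) / 2) (gaussianReal 0 v) ∧
    ∫ z, (exp (-(2 * l * g ^ 2) + 4 * l * g * z) +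
        (1 + κ * (exp (4 * l * A * z) + exp (-(4 * l * A * z))))) / 2 ∂gaussianReal 0 v
      = (exp (-(l * g ^ 2)) + (1 + κ * (2 * exp (l * A ^ 2)))) / 2 := by
  have hpos := integrable_exp_add_mul_gaussianReal v 0 (4 * l * A)
  have hneg := integrable_exp_add_mul_gaussianReal v 0 (-(4 * l * A))
  have hloss := integrable_exp_add_mul_gaussianReal v (-(2 * l * g ^ 2)) (4 * l * g)
  have hIpos := integral_exp_add_mul_gaussianReal v 0 (4 * l * A)
  have hIneg := integral_exp_add_mul_gaussianReal v 0 (-(4 * l * A))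
  simp only [zero_add, neg_mul] at hpos hneg hIpos hIneg
  have hsum := (hpos.fun_add hneg).const_mul κ
  have hone := (integrable_const (μ := gaussianReal 0 v) (1 : ℝ)).fun_add hsum
  refine ⟨(hloss.fun_add hone).div_const 2, ?_⟩
  have hexpA : (v : ℝ) * (4 * l * A) ^ 2 / 2 = l * A ^ 2 := by
    linear_combination l * A ^ 2 * hlv
  have hexpg : -(2 * l * g ^ 2) + v * (4 * l * g) ^ 2 / 2 = -(l * g ^ 2) := by
    linear_combination l * g ^ 2 * hlv
  rw [integral_div, integral_add hloss hone, integral_add (integrable_const _) hsum,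
    integral_const_mul, integral_add hpos hneg, integral_exp_add_mul_gaussianReal, hIpos, hIneg,
    neg_sq, hexpA, hexpg]
  simp only [integral_const, probReal_univ, smul_eq_mul, one_mul]
  ring

lemma lintegral_exp_neg_excess_add_bracket_le (hl : 0 < l) (hlv : 8 * l * v = 1) (hA : 0 < A)
    (hg : |g| ≤ A) (hD : 0 ≤ D) (hDA : D ≤ A) :
    ∫⁻ z, ENNReal.ofReal (exp (-(l * (g ^ 2 - 2 * z * g)) + l * D * (2 * A + 2 * |z|)))
        ∂gaussianReal 0 v ≤
      ENNReal.ofReal (1 - lossCurvature l A * g ^ 2 / 2 + bracketCost l A * D / 2) := by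
  obtain ⟨hInt, hval⟩ :=
    hasMean_exp_bracket_majorant hlv A g (D / A * exp (4 * l * A ^ 2))
  refine (lintegral_mono fun z => ENNReal.ofReal_le_ofReal
    (exp_neg_excess_add_bracket_le (g := g) hl hA hD hDA z)).trans ?_
  rw [← ofReal_integral_eq_lintegral_ofReal hInt (ae_of_all _ fun z => by positivity), hval]
  refine ENNReal.ofReal_le_ofReal ?_
  have hcost : D / A * exp (4 * l * A ^ 2) * (2 * exp (l * A ^ 2)) = bracketCost l A * D := by
    rw [bracketCost, show 5 * l * A ^ 2 = 4 * l * A ^ 2 + l * A ^ 2 by ring, exp_add]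
    ring
  linarith [exp_neg_mul_sq_le hl hg]

end GaussianExponentialMoments

section SquaredLoss

variable {𝓧 : Type*} {f₀ f g D : 𝓧 → ℝ}

/-- The residual sum of squares of `f` on the sample `d`. -/
def residualSS {n : ℕ} (f : 𝓧 → ℝ) (d : Fin n → 𝓧 × ℝ) : ℝ := ∑ i, ((d i).2 - f (d i).1) ^ 2

/-- The weight in the Chernoff bound for a bracket: minus the excess loss of its center `g`, plus
a bound for the largest deviation from it of the loss of any other function in the bracket. -/
def bracketWeight (l A : ℝ) (f₀ g D : 𝓧 → ℝ) (e : 𝓧 × ℝ) : ℝ :=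
  -(l * ((e.2 - g e.1) ^ 2 - (e.2 - f₀ e.1) ^ 2)) +
    l * D e.1 * (2 * A + 2 * |e.2 - f₀ e.1|)

lemma neg_excess_le_bracketWeight {l A : ℝ} (hl : 0 ≤ l) {e : 𝓧 × ℝ}
    (hf : |f e.1 - f₀ e.1| ≤ A) (hg : |g e.1 - f₀ e.1| ≤ A) (hfg : |f e.1 - g e.1| ≤ D e.1) :
    -(l * ((e.2 - f e.1) ^ 2 - (e.2 - f₀ e.1) ^ 2)) ≤ bracketWeight l A f₀ g D e := by
  have hfactor : (e.2 - g e.1) ^ 2 - (e.2 - f e.1) ^ 2 ≤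
      D e.1 * (2 * A + 2 * |e.2 - f₀ e.1|) := by
    calc (e.2 - g e.1) ^ 2 - (e.2 - f e.1) ^ 2
        = (f e.1 - g e.1) * (2 * (e.2 - f₀ e.1) - (f e.1 - f₀ e.1) - (g e.1 - f₀ e.1)) := by ring
      _ ≤ |f e.1 - g e.1| * |2 * (e.2 - f₀ e.1) - (f e.1 - f₀ e.1) - (g e.1 - f₀ e.1)| := by
          rw [← abs_mul]
          exact le_abs_self _
      _ ≤ D e.1 * (2 * A + 2 * |e.2 - f₀ e.1|) := by
          have htri := abs_sub (2 * (e.2 - f₀ e.1) - (f e.1 - f₀ e.1)) (g e.1 - f₀ e.1)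
          have htri' := abs_sub (2 * (e.2 - f₀ e.1)) (f e.1 - f₀ e.1)
          rw [abs_mul, abs_two] at htri'
          exact mul_le_mul hfg (by linarith) (abs_nonneg _) ((abs_nonneg _).trans hfg)
  rw [bracketWeight]
  nlinarith [mul_le_mul_of_nonneg_left hfactor hl]

lemma lintegral_exp_bracketWeight_apply_le {v : ℝ≥0} {l A : ℝ} (hl : 0 < l) (hlv : 8 * l * v = 1)
    (hA : 0 < A) {x : 𝓧} (hg : |g x - f₀ x| ≤ A) (hD0 : 0 ≤ D x) (hDA : D x ≤ A) :
    ∫⁻ z, ENNReal.ofReal (exp (bracketWeight l A f₀ g D (x, f₀ x + z)))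
        ∂ProbabilityTheory.gaussianReal 0 v ≤
      ENNReal.ofReal (1 + (-(lossCurvature l A / 2) * (g x - f₀ x) ^ 2 +
        bracketCost l A / 2 * D x)) := by
  have hW : ∀ z, bracketWeight l A f₀ g D (x, f₀ x + z) =
      -(l * ((g x - f₀ x) ^ 2 - 2 * z * (g x - f₀ x))) + l * D x * (2 * A + 2 * |z|) := fun z => by
    rw [bracketWeight, add_sub_cancel_left]
    ring
  simp only [hW]
  refine (lintegral_exp_neg_excess_add_bracket_le hl hlv hA hg hD0 hDA).trans_eq ?_
  congr 1
  ring

lemma one_add_bracket_exponent_nonneg {l A g D : ℝ} (hl : 0 < l) (hA : 0 < A) (hg : |g| ≤ A)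
    (hD : 0 ≤ D) : 0 ≤ 1 + (-(lossCurvature l A / 2) * g ^ 2 + bracketCost l A / 2 * D) := by
  have hcost : 0 ≤ bracketCost l A * D := by
    unfold bracketCost
    positivity
  linarith [exp_neg_mul_sq_le hl hg, exp_pos (-(l * g ^ 2))]

end SquaredLoss

section GaussianRegression

open ProbabilityTheory

variable {𝓧 : Type*} [MeasurableSpace 𝓧] {ν : Measure 𝓧} {f₀ g D : 𝓧 → ℝ} {v : ℝ≥0}

/-- The law of an observation `(X, f₀ X + e)` with covariate `X ∼ ν` and independent noise
`e ∼ N(0, v)`. -/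
def regressionMeasure (ν : Measure 𝓧) (f₀ : 𝓧 → ℝ) (v : ℝ≥0) : Measure (𝓧 × ℝ) :=
  (ν.prod (gaussianReal 0 v)).map fun q => (q.1, f₀ q.1 + q.2)

lemma measurable_regressionMap (hf₀ : Measurable f₀) :
    Measurable fun q : 𝓧 × ℝ => (q.1, f₀ q.1 + q.2) := by
  fun_prop

lemma isProbabilityMeasure_regressionMeasure [IsProbabilityMeasure ν] (hf₀ : Measurable f₀)
    (v : ℝ≥0) : IsProbabilityMeasure (regressionMeasure ν f₀ v) :=
  Measure.isProbabilityMeasure_map (measurable_regressionMap hf₀).aemeasurable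

lemma lintegral_regressionMeasure [SFinite ν] (hf₀ : Measurable f₀) {F : 𝓧 × ℝ → ℝ≥0∞}
    (hF : Measurable F) :
    ∫⁻ e, F e ∂regressionMeasure ν f₀ v = ∫⁻ x, ∫⁻ z, F (x, f₀ x + z) ∂gaussianReal 0 v ∂ν := by
  have hmap := measurable_regressionMap hf₀
  rw [regressionMeasure, lintegral_map hF hmap, lintegral_prod]
  exact (hF.comp hmap).aemeasurable

lemma ae_fst_mem_regressionMeasure [SFinite ν] (hf₀ : Measurable f₀) {S : Set 𝓧}
    (hS : ∀ᵐ x ∂ν, x ∈ S) : ∀ᵐ e ∂regressionMeasure ν f₀ v, e.1 ∈ S := by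
  have hfst : (regressionMeasure ν f₀ v).map Prod.fst = ν := by
    rw [regressionMeasure, Measure.map_map measurable_fst (measurable_regressionMap hf₀)]
    exact Measure.fst_prod
  exact Measure.QuasiMeasurePreserving.ae ⟨measurable_fst, hfst.absolutelyContinuous⟩ hS

lemma ae_pi_fst_mem_regressionMeasure [IsProbabilityMeasure ν] (hf₀ : Measurable f₀) {S : Set 𝓧}
    (hS : ∀ᵐ x ∂ν, x ∈ S) (n : ℕ) :
    ∀ᵐ d ∂Measure.pi fun _ : Fin n => regressionMeasure ν f₀ v, ∀ i, (d i).1 ∈ S := by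
  have := isProbabilityMeasure_regressionMeasure (ν := ν) hf₀ v
  exact ae_all_iff.2 fun i =>
    (Measure.tendsto_eval_ae_ae (μ := fun _ : Fin n => regressionMeasure ν f₀ v)).eventually
      (ae_fst_mem_regressionMeasure hf₀ hS)

lemma measure_pi_le_residualSS_sub_le [IsProbabilityMeasure ν] (hf₀ : Measurable f₀) {l : ℝ}
    (hl : 0 < l) (hlv : 8 * l * v = 1) (hg : Measurable g) {η : ℝ}
    (hgη : ∀ᵐ x ∂ν, |g x - f₀ x| ≤ η) (n : ℕ) (t : ℝ) :
    Measure.pi (fun _ : Fin n => regressionMeasure ν f₀ v)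
        {d | residualSS f₀ d + t ≤ residualSS g d}
      ≤ ENNReal.ofReal (exp (n * (5 / 4 * l * η ^ 2) - l * t)) := by
  have := isProbabilityMeasure_regressionMeasure (ν := ν) hf₀ v
  set W : 𝓧 × ℝ → ℝ := fun e => l * ((e.2 - g e.1) ^ 2 - (e.2 - f₀ e.1) ^ 2) with hWdef
  have hW : Measurable W := by fun_prop
  have hset : {d : Fin n → 𝓧 × ℝ | residualSS f₀ d + t ≤ residualSS g d} =
      {d | l * t ≤ ∑ i, W (d i)} := by
    ext d
    simp only [Set.mem_ofPred_eq, hWdef, ← Finset.mul_sum, Finset.sum_sub_distrib, residualSS]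
    rw [mul_le_mul_iff_right₀ hl, le_sub_iff_add_le']
  have hmoment : ∫⁻ e, ENNReal.ofReal (exp (W e)) ∂regressionMeasure ν f₀ v ≤
      ENNReal.ofReal (exp (5 / 4 * l * η ^ 2)) := by
    rw [lintegral_regressionMeasure hf₀ (by fun_prop)]
    refine lintegral_le_const (hgη.mono fun x hx => ?_)
    have hWx : ∀ z, W (x, f₀ x + z) = l * ((g x - f₀ x) ^ 2 - 2 * z * (g x - f₀ x)) := fun z => by
      simp only [hWdef]
      ring
    simp only [hWx, lintegral_exp_excess hlv]
    have hsq : (g x - f₀ x) ^ 2 ≤ η ^ 2 := sq_le_sq' (abs_le.1 hx).1 (abs_le.1 hx).2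
    gcongr
  rw [hset]
  refine (measure_pi_le_sum_le_exp_mul_pow _ n hW _).trans ?_
  calc _ ≤ ENNReal.ofReal (exp (-(l * t))) * ENNReal.ofReal (exp (5 / 4 * l * η ^ 2)) ^ n := by
        gcongr
    _ = _ := by
        rw [← ENNReal.ofReal_pow (exp_pos _).le, ← ENNReal.ofReal_mul (exp_pos _).le,
          ← Real.exp_nat_mul, ← exp_add, neg_add_eq_sub]

lemma measurable_bracketWeight (l A : ℝ) (hf₀ : Measurable f₀) (hg : Measurable g)
    (hD : Measurable D) : Measurable (bracketWeight l A f₀ g D) := by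
  unfold bracketWeight
  fun_prop

lemma lintegral_exp_bracketWeight_le [IsProbabilityMeasure ν] (hf₀ : Measurable f₀) {l A : ℝ}
    (hl : 0 < l) (hlv : 8 * l * v = 1) (hA : 0 < A) (hg : Measurable g) (hD : Measurable D)
    (hgA : ∀ᵐ x ∂ν, |g x - f₀ x| ≤ A) (hD0 : ∀ᵐ x ∂ν, 0 ≤ D x) (hDA : ∀ᵐ x ∂ν, D x ≤ A) :
    ∫⁻ e, ENNReal.ofReal (exp (bracketWeight l A f₀ g D e)) ∂regressionMeasure ν f₀ v ≤
      ENNReal.ofReal (exp (-(lossCurvature l A / 2) * ∫ x, (g x - f₀ x) ^ 2 ∂ν +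
        bracketCost l A / 2 * ∫ x, D x ∂ν)) := by
  have hW := measurable_bracketWeight l A hf₀ hg hD
  have hsq : Integrable (fun x => (g x - f₀ x) ^ 2) ν :=
    Integrable.of_bound (by fun_prop) (A ^ 2) (hgA.mono fun x hx => by
      rw [Real.norm_eq_abs, abs_pow]
      gcongr)
  have hDi : Integrable D ν := Integrable.of_bound (by fun_prop) A (by
    filter_upwards [hD0, hDA] with x hx0 hxA
    rwa [Real.norm_eq_abs, abs_of_nonneg hx0])
  have hsq' := hsq.const_mul (-(lossCurvature l A / 2))
  have hDi' := hDi.const_mul (bracketCost l A / 2)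
  have hone := (integrable_const (1 : ℝ)).fun_add (hsq'.fun_add hDi')
  rw [lintegral_regressionMeasure hf₀ (by fun_prop)]
  calc _ ≤ ∫⁻ x, ENNReal.ofReal (1 + (-(lossCurvature l A / 2) * (g x - f₀ x) ^ 2 +
        bracketCost l A / 2 * D x)) ∂ν := by
        refine lintegral_mono_ae ?_
        filter_upwards [hgA, hD0, hDA] with x hxA hx0 hxD
        exact lintegral_exp_bracketWeight_apply_le hl hlv hA hxA hx0 hxD
    _ = ENNReal.ofReal (1 + (-(lossCurvature l A / 2) * ∫ x, (g x - f₀ x) ^ 2 ∂ν +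
        bracketCost l A / 2 * ∫ x, D x ∂ν)) := by
        rw [← ofReal_integral_eq_lintegral_ofReal hone (by
          filter_upwards [hgA, hD0] with x hxA hx0
          exact one_add_bracket_exponent_nonneg hl hA hxA hx0),
          integral_add (integrable_const 1) (hsq'.fun_add hDi'), integral_add hsq' hDi',
          integral_const_mul, integral_const_mul, integral_const, probReal_univ, one_smul]
    _ ≤ _ := ENNReal.ofReal_le_ofReal ((add_comm _ _).trans_le (add_one_le_exp _))

/-- An `L¹(ν)`-bracketing of the class `𝓕` by finitely many pairs (center, radius function): on
`S` every member of `𝓕` is within the radius of some center, and the radii have `L¹`-norm at most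
`τ`. Centers are within `A` of the regression function `f₀`, and radii are at most `A`. -/
structure IsBracketing (ν : Measure 𝓧) (f₀ : 𝓧 → ℝ) (S : Set 𝓧) (A τ : ℝ) (𝓕 : Set (𝓧 → ℝ))
    (T : Finset ((𝓧 → ℝ) × (𝓧 → ℝ))) : Prop where
  measurable_center : ∀ b ∈ T, Measurable b.1
  measurable_radius : ∀ b ∈ T, Measurable b.2
  abs_center_sub_le : ∀ b ∈ T, ∀ x ∈ S, |b.1 x - f₀ x| ≤ A
  radius_nonneg : ∀ b ∈ T, ∀ x ∈ S, 0 ≤ b.2 x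
  radius_le : ∀ b ∈ T, ∀ x ∈ S, b.2 x ≤ A
  integral_radius_le : ∀ b ∈ T, ∫ x, b.2 x ∂ν ≤ τ
  exists_bracket : ∀ f ∈ 𝓕, ∃ b ∈ T, ∀ x ∈ S, |f x - b.1 x| ≤ b.2 x

variable {S : Set 𝓧} {A τ l : ℝ} {𝓕 : Set (𝓧 → ℝ)} {T : Finset ((𝓧 → ℝ) × (𝓧 → ℝ))}

namespace IsBracketing

lemma mono (hT : IsBracketing ν f₀ S A τ 𝓕 T) {τ' : ℝ} (hτ : τ ≤ τ') :
    IsBracketing ν f₀ S A τ' 𝓕 T :=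
  { hT with integral_radius_le := fun b hb => (hT.integral_radius_le b hb).trans hτ }

lemma integral_sq_sub_le [IsProbabilityMeasure ν] (hT : IsBracketing ν f₀ S A τ 𝓕 T)
    (hf₀ : Measurable f₀) (hA : 0 < A) (hS : ∀ᵐ x ∂ν, x ∈ S) {f : 𝓧 → ℝ}
    (hf : ∀ x ∈ S, |f x - f₀ x| ≤ A) {b : (𝓧 → ℝ) × (𝓧 → ℝ)} (hb : b ∈ T)
    (hfb : ∀ x ∈ S, |f x - b.1 x| ≤ b.2 x) :
    ∫ x, (f x - f₀ x) ^ 2 ∂ν ≤ ∫ x, (b.1 x - f₀ x) ^ 2 ∂ν + 2 * A * τ := by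
  have hb₁ := hT.measurable_center b hb
  have hsq : Integrable (fun x => (b.1 x - f₀ x) ^ 2) ν :=
    Integrable.of_bound (by fun_prop) (A ^ 2) (hS.mono fun x hx => by
      rw [Real.norm_eq_abs, abs_pow]
      have := hT.abs_center_sub_le b hb x hx
      gcongr)
  have hDi : Integrable b.2 ν :=
    Integrable.of_bound (hT.measurable_radius b hb).aestronglyMeasurable A (hS.mono fun x hx => by
      rw [Real.norm_eq_abs, abs_of_nonneg (hT.radius_nonneg b hb x hx)]
      exact hT.radius_le b hb x hx)
  have hpoint : ∀ x ∈ S, (f x - f₀ x) ^ 2 ≤ (b.1 x - f₀ x) ^ 2 + 2 * A * b.2 x := fun x hx => by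
    have htri := abs_add_le (f x - f₀ x) (b.1 x - f₀ x)
    have hfac : (f x - b.1 x) * ((f x - f₀ x) + (b.1 x - f₀ x)) ≤ b.2 x * (2 * A) :=
      (le_abs_self _).trans <| (abs_mul _ _).trans_le <|
        mul_le_mul (hfb x hx) (by linarith [hf x hx, hT.abs_center_sub_le b hb x hx])
          (abs_nonneg _) (hT.radius_nonneg b hb x hx)
    linarith
  calc ∫ x, (f x - f₀ x) ^ 2 ∂ν ≤ ∫ x, ((b.1 x - f₀ x) ^ 2 + 2 * A * b.2 x) ∂ν :=
        integral_mono_of_nonneg (ae_of_all _ fun x => sq_nonneg _)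
          (hsq.fun_add (hDi.const_mul _)) (hS.mono hpoint)
    _ = ∫ x, (b.1 x - f₀ x) ^ 2 ∂ν + 2 * A * ∫ x, b.2 x ∂ν := by
        rw [integral_add hsq (hDi.const_mul _), integral_const_mul]
    _ ≤ _ := by
        have := hT.integral_radius_le b hb
        gcongr

lemma measure_pi_bracket_le [IsProbabilityMeasure ν] (hT : IsBracketing ν f₀ S A τ 𝓕 T)
    (hf₀ : Measurable f₀) (hl : 0 < l) (hlv : 8 * l * v = 1) (hA : 0 < A)
    (hS : ∀ᵐ x ∂ν, x ∈ S) {b : (𝓧 → ℝ) × (𝓧 → ℝ)} (hb : b ∈ T) {r : ℝ}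
    (hr : r ≤ ∫ x, (b.1 x - f₀ x) ^ 2 ∂ν) (n : ℕ) (t : ℝ) :
    Measure.pi (fun _ : Fin n => regressionMeasure ν f₀ v)
        {d | -(l * t) ≤ ∑ i, bracketWeight l A f₀ b.1 b.2 (d i)} ≤
      ENNReal.ofReal (exp (l * t +
        n * (-(lossCurvature l A / 2) * r + bracketCost l A / 2 * τ))) := by
  have := isProbabilityMeasure_regressionMeasure (ν := ν) hf₀ v
  have hmoment := lintegral_exp_bracketWeight_le hf₀ hl hlv hA (hT.measurable_center b hb)
    (hT.measurable_radius b hb) (hS.mono (hT.abs_center_sub_le b hb))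
    (hS.mono (hT.radius_nonneg b hb)) (hS.mono (hT.radius_le b hb))
  have hc : 0 ≤ lossCurvature l A / 2 := by
    unfold lossCurvature
    positivity
  have hC : 0 ≤ bracketCost l A / 2 := by
    unfold bracketCost
    positivity
  have hexponent : -(lossCurvature l A / 2) * ∫ x, (b.1 x - f₀ x) ^ 2 ∂ν +
      bracketCost l A / 2 * ∫ x, b.2 x ∂ν ≤
        -(lossCurvature l A / 2) * r + bracketCost l A / 2 * τ := by
    linarith [mul_le_mul_of_nonneg_left hr hc,
      mul_le_mul_of_nonneg_left (hT.integral_radius_le b hb) hC]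
  refine (measure_pi_le_sum_le_exp_mul_pow _ n (measurable_bracketWeight l A hf₀
    (hT.measurable_center b hb) (hT.measurable_radius b hb)) _).trans ?_
  rw [neg_neg]
  calc _ ≤ ENNReal.ofReal (exp (l * t)) * ENNReal.ofReal (exp
          (-(lossCurvature l A / 2) * r + bracketCost l A / 2 * τ)) ^ n := by
        gcongr
        exact hmoment.trans (by gcongr)
    _ = _ := by
        rw [← ENNReal.ofReal_pow (exp_pos _).le, ← ENNReal.ofReal_mul (exp_pos _).le,
          ← Real.exp_nat_mul, ← exp_add]

theorem measure_pi_exists_excess_le [IsProbabilityMeasure ν] (hT : IsBracketing ν f₀ S A τ 𝓕 T)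
    (hf₀ : Measurable f₀) (hl : 0 < l) (hlv : 8 * l * v = 1) (hA : 0 < A)
    (hS : ∀ᵐ x ∂ν, x ∈ S) (h𝓕 : ∀ f ∈ 𝓕, ∀ x ∈ S, |f x - f₀ x| ≤ A) (n : ℕ) (r t : ℝ) :
    Measure.pi (fun _ : Fin n => regressionMeasure ν f₀ v)
        {d | ∃ f ∈ 𝓕, r ≤ ∫ x, (f x - f₀ x) ^ 2 ∂ν ∧ residualSS f d ≤ residualSS f₀ d + t} ≤
      ENNReal.ofReal (T.card * exp (l * t +
        n * (-(lossCurvature l A / 2) * (r - 2 * A * τ) + bracketCost l A / 2 * τ))) := by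
  set T' := T.filter fun b => r - 2 * A * τ ≤ ∫ x, (b.1 x - f₀ x) ^ 2 ∂ν
  have hcover : ∀ᵐ d ∂Measure.pi fun _ : Fin n => regressionMeasure ν f₀ v,
      (∃ f ∈ 𝓕, r ≤ ∫ x, (f x - f₀ x) ^ 2 ∂ν ∧ residualSS f d ≤ residualSS f₀ d + t) →
        d ∈ ⋃ b ∈ T', {d | -(l * t) ≤ ∑ i, bracketWeight l A f₀ b.1 b.2 (d i)} := by
    filter_upwards [ae_pi_fst_mem_regressionMeasure (v := v) hf₀ hS n] with d hd
    rintro ⟨f, hf, hr, hft⟩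
    obtain ⟨b, hb, hfb⟩ := hT.exists_bracket f hf
    have hbT' : b ∈ T' := Finset.mem_filter.2
      ⟨hb, by linarith [hT.integral_sq_sub_le hf₀ hA hS (h𝓕 f hf) hb hfb]⟩
    refine Set.mem_biUnion hbT' ?_
    calc -(l * t) ≤ ∑ i, -(l * (((d i).2 - f (d i).1) ^ 2 - ((d i).2 - f₀ (d i).1) ^ 2)) := by
          rw [Finset.sum_neg_distrib, ← Finset.mul_sum, Finset.sum_sub_distrib, neg_le_neg_iff]
          exact mul_le_mul_of_nonneg_left (sub_le_iff_le_add'.2 hft) hl.le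
      _ ≤ ∑ i, bracketWeight l A f₀ b.1 b.2 (d i) := Finset.sum_le_sum fun i _ =>
          neg_excess_le_bracketWeight hl.le (h𝓕 f hf _ (hd i)) (hT.abs_center_sub_le b hb _ (hd i))
            (hfb _ (hd i))
  refine (measure_mono_ae hcover).trans ((measure_biUnion_finset_le _ _).trans ?_)
  refine (Finset.sum_le_card_nsmul _ _ _ fun b hb => hT.measure_pi_bracket_le hf₀ hl hlv hA hS
    (Finset.mem_filter.1 hb).1 (Finset.mem_filter.1 hb).2 n t).trans ?_
  rw [nsmul_eq_mul, ENNReal.ofReal_mul (Nat.cast_nonneg _), ENNReal.ofReal_natCast]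
  gcongr
  exact Finset.filter_subset _ _

end IsBracketing

end GaussianRegression

section RateOfConvergence

open scoped Topology

variable {𝓧 : Type*} [MeasurableSpace 𝓧] {ν : Measure 𝓧} [IsProbabilityMeasure ν] {f₀ : 𝓧 → ℝ}
  {v : ℝ≥0} {S : Set 𝓧} {A : ℝ}

/-- `f` is a least-squares fit to the sample `d` over the class `𝓕`. -/
def IsLeastSquares {𝓧 : Type*} {n : ℕ} (𝓕 : Set (𝓧 → ℝ)) (d : Fin n → 𝓧 × ℝ) (f : 𝓧 → ℝ) :
    Prop :=
  f ∈ 𝓕 ∧ ∀ g ∈ 𝓕, residualSS f d ≤ residualSS g d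

lemma measure_pi_exists_isLeastSquares_le {l τ : ℝ} {𝓕 : Set (𝓧 → ℝ)}
    {T : Finset ((𝓧 → ℝ) × (𝓧 → ℝ))} (hT : IsBracketing ν f₀ S A τ 𝓕 T) (hf₀ : Measurable f₀)
    (hl : 0 < l) (hlv : 8 * l * v = 1) (hA : 0 < A) (hS : ∀ᵐ x ∂ν, x ∈ S)
    (h𝓕 : ∀ f ∈ 𝓕, ∀ x ∈ S, |f x - f₀ x| ≤ A) {g : 𝓧 → ℝ} (hg : g ∈ 𝓕) (hgm : Measurable g)
    {η : ℝ} (hgη : ∀ x ∈ S, |g x - f₀ x| ≤ η) (n : ℕ) (r t : ℝ) :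
    Measure.pi (fun _ : Fin n => regressionMeasure ν f₀ v)
        {d | ∃ f, IsLeastSquares 𝓕 d f ∧ r ≤ ∫ x, (f x - f₀ x) ^ 2 ∂ν} ≤
      ENNReal.ofReal (exp (n * (5 / 4 * l * η ^ 2) - l * t)) +
        ENNReal.ofReal (T.card * exp (l * t +
          n * (-(lossCurvature l A / 2) * (r - 2 * A * τ) + bracketCost l A / 2 * τ))) := by
  have hsub : {d : Fin n → 𝓧 × ℝ | ∃ f, IsLeastSquares 𝓕 d f ∧ r ≤ ∫ x, (f x - f₀ x) ^ 2 ∂ν} ⊆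
      {d | residualSS f₀ d + t ≤ residualSS g d} ∪
        {d | ∃ f ∈ 𝓕, r ≤ ∫ x, (f x - f₀ x) ^ 2 ∂ν ∧
          residualSS f d ≤ residualSS f₀ d + t} := by
    rintro d ⟨f, ⟨hf, hmin⟩, hr⟩
    rcases le_total (residualSS f₀ d + t) (residualSS g d) with h | h
    · exact Or.inl h
    · exact Or.inr ⟨f, hf, hr, (hmin g hg).trans h⟩
  exact (measure_mono hsub).trans <| (measure_union_le _ _).trans <| add_le_add
    (measure_pi_le_residualSS_sub_le hf₀ hl hlv hgm (hS.mono hgη) n t)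
    (hT.measure_pi_exists_excess_le hf₀ hl hlv hA hS h𝓕 n r t)

/-- With `u = n * ε ^ 2` the two terms of the non-asymptotic bound become `exp (-l * u)` and
`exp (-u)`: the level `t` is taken as a large multiple of `u`, and then `M` large. -/
theorem exists_tendsto_measure_pi_isLeastSquares (hf₀ : Measurable f₀) (hv : v ≠ 0) (hA : 0 < A)
    (hS : ∀ᵐ x ∂ν, x ∈ S) {𝓕 : ℕ → Set (𝓧 → ℝ)} {ε : ℕ → ℝ} {a b : ℝ}
    (hε : Tendsto (fun n : ℕ => n * ε n ^ 2) atTop atTop)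
    (h𝓕 : ∀ᶠ n in atTop, ∀ f ∈ 𝓕 n, ∀ x ∈ S, |f x - f₀ x| ≤ A)
    (happrox : ∀ᶠ n in atTop, ∃ g ∈ 𝓕 n, Measurable g ∧ ∀ x ∈ S, |g x - f₀ x| ≤ a * ε n)
    (hbracket : ∀ᶠ n : ℕ in atTop, ∃ T, IsBracketing ν f₀ S A (b * ε n ^ 2) (𝓕 n) T ∧
      T.card ≤ exp (b * (n * ε n ^ 2))) :
    ∃ M, 0 < M ∧ Tendsto (fun n => Measure.pi (fun _ : Fin n => regressionMeasure ν f₀ v)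
      {d | ∃ f, IsLeastSquares (𝓕 n) d f ∧ (M * ε n) ^ 2 ≤ ∫ x, (f x - f₀ x) ^ 2 ∂ν})
      atTop (𝓝 0) := by
  obtain ⟨l, hl, hlv⟩ : ∃ l : ℝ, 0 < l ∧ 8 * l * v = 1 :=
    ⟨(8 * (v : ℝ))⁻¹, by positivity, by field_simp⟩
  set s := 5 / 4 * a ^ 2 + 1 with hs
  set c := lossCurvature l A with hc
  have hc0 : 0 < c := by
    rw [hc, lossCurvature]
    positivity
  set Q := b + l * s + c * A * b + bracketCost l A / 2 * b + 1
  set M := |2 * Q / c| + 1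
  have hMQ : Q ≤ c / 2 * M ^ 2 := by
    have h : 2 * Q / c ≤ M ^ 2 := by nlinarith [le_abs_self (2 * Q / c), abs_nonneg (2 * Q / c)]
    rw [div_le_iff₀ hc0] at h
    linarith
  have hlimit : ∀ k : ℝ, 0 < k →
      Tendsto (fun n : ℕ => ENNReal.ofReal (exp (-k * (n * ε n ^ 2)))) atTop (𝓝 0) := fun k hk => by
    rw [← ENNReal.ofReal_zero]
    exact ENNReal.tendsto_ofReal
      (tendsto_exp_atBot.comp (hε.const_mul_atTop_of_neg (neg_neg_of_pos hk)))
  refine ⟨M, by positivity, tendsto_of_tendsto_of_tendsto_of_le_of_le' tendsto_const_nhds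
    (by simpa using (hlimit l hl).add (hlimit 1 one_pos)) (.of_forall fun _ => zero_le) ?_⟩
  filter_upwards [h𝓕, happrox, hbracket] with n h𝓕n ⟨g, hg, hgm, hga⟩ ⟨T, hT, hcard⟩
  refine (measure_pi_exists_isLeastSquares_le hT hf₀ hl hlv hA hS h𝓕n hg hgm hga n _
    (s * (n * ε n ^ 2))).trans (add_le_add ?_ ?_) <;> refine ENNReal.ofReal_le_ofReal ?_
  · rw [exp_le_exp, hs]
    linarith
  · have hu : 0 ≤ n * ε n ^ 2 := by positivity
    refine (mul_le_mul_of_nonneg_right hcard (exp_pos _).le).trans ?_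
    rw [← exp_add, exp_le_exp]
    linear_combination mul_le_mul_of_nonneg_right hMQ hu

end RateOfConvergence

section Blocks

variable {p K : ℕ} {k : Fin p → Fin K} {x y : Fin p → ℝ}

lemma exists_mem_blockCl (hK : 0 < K) (hx : x ∈ cube p) : ∃ k : Fin p → Fin K, x ∈ blockCl K k := by
  have hK' : (0 : ℝ) < K := by exact_mod_cast hK
  refine ⟨fun j => ⟨min ⌊x j * K⌋₊ (K - 1), by lia⟩, fun j => ?_⟩
  obtain ⟨h0, h1⟩ := hx j
  have hxK : 0 ≤ x j * K := by positivity
  rw [div_le_iff₀ hK', le_div_iff₀ hK']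
  constructor
  · calc ((min ⌊x j * K⌋₊ (K - 1) : ℕ) : ℝ) ≤ (⌊x j * K⌋₊ : ℝ) := by
          exact_mod_cast min_le_left _ _
      _ ≤ x j * K := Nat.floor_le hxK
  · rcases le_total ⌊x j * K⌋₊ (K - 1) with h | h
    · simpa only [min_eq_left h] using (Nat.lt_floor_add_one _).le
    · simp only [min_eq_right h, Nat.cast_sub (Nat.succ_le_of_lt hK), Nat.cast_one, sub_add_cancel]
      exact mul_le_of_le_one_left hK'.le h1

lemma blockCl_subset_cube : blockCl K k ⊆ cube p := fun x hx j => by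
  have hK' : (0 : ℝ) < K := by exact_mod_cast (k j).pos
  refine ⟨(by positivity : (0 : ℝ) ≤ (k j : ℕ) / K).trans (hx j).1, (hx j).2.trans ?_⟩
  rw [div_le_one hK']
  exact_mod_cast (k j).2

lemma center_mem_blockCl : center K k ∈ blockCl K k := fun j => by
  have hK' : (0 : ℝ) < K := by exact_mod_cast (k j).pos
  unfold center
  constructor
  · rw [div_le_div_iff₀ hK' (by positivity)]
    nlinarith
  · rw [div_le_div_iff₀ (by positivity) hK']
    nlinarith

lemma abs_sub_le_inv_of_mem_blockCl (hx : x ∈ blockCl K k) (hy : y ∈ blockCl K k) (j : Fin p) :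
    |x j - y j| ≤ 1 / K := by
  have hx' := hx j
  have hy' := hy j
  rw [add_div] at hx' hy'
  rw [abs_le]
  constructor <;> linarith

lemma abs_sub_le_one_of_mem_cube (hx : x ∈ cube p) (hy : y ∈ cube p) (j : Fin p) :
    |x j - y j| ≤ 1 := by
  have hx' := hx j
  have hy' := hy j
  rw [abs_le]
  constructor <;> linarith

end Blocks

section KernelWeights

variable {p K : ℕ} {φ : (Fin p → ℝ) → ℝ} {h hmin : ℝ} {μ : (Fin p → Fin K) → Fin p → ℝ}
  {x : Fin p → ℝ}

/-- The rescaled kernel `φ_h(x - c)`. -/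
def scaledKernel (φ : (Fin p → ℝ) → ℝ) (h : ℝ) (c x : Fin p → ℝ) : ℝ :=
  φ fun j => (x j - c j) / h

/-- The normalizing sum `∑_l φ_h(x - μ_l)` of the kernel mixture weights. -/
def kernelSum (φ : (Fin p → ℝ) → ℝ) (h : ℝ) (μ : (Fin p → Fin K) → Fin p → ℝ) (x : Fin p → ℝ) :
    ℝ :=
  ∑ l, scaledKernel φ h (μ l) x

lemma weight_eq_div (k : Fin p → Fin K) :
    weight φ K h μ k x = scaledKernel φ h (μ k) x / kernelSum φ h μ x :=
  rfl

lemma weight_nonneg (hφ : IsBoxedKernel φ) (k : Fin p → Fin K) : 0 ≤ weight φ K h μ k x :=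
  div_nonneg (hφ.2.1 _).1 (Finset.sum_nonneg fun _ _ => (hφ.2.1 _).1)

lemma sum_weight (hx : kernelSum φ h μ x ≠ 0) : ∑ k, weight φ K h μ k x = 1 := by
  simp only [weight_eq_div, ← Finset.sum_div]
  exact div_self hx

lemma norm_sub_le_of_weight_ne_zero (hφ : IsBoxedKernel φ) (hh : 0 < h) {k : Fin p → Fin K}
    (hw : weight φ K h μ k x ≠ 0) : ‖x - μ k‖ ≤ h := by
  have hφk : scaledKernel φ h (μ k) x ≠ 0 := fun h0 => hw (by rw [weight_eq_div, h0, zero_div])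
  have hnorm : ‖fun j => (x j - μ k j) / h‖ ≤ 1 := by
    by_contra! hlt
    exact hφk (hφ.2.2.1 _ hlt)
  refine (pi_norm_le_iff_of_nonneg hh.le).2 fun j => ?_
  have hj := (norm_le_pi_norm _ j).trans hnorm
  rwa [norm_div, Real.norm_of_nonneg hh.le, div_le_one hh] at hj

lemma abs_sum_weight_mul_le (hφ : IsBoxedKernel φ) (hx : kernelSum φ h μ x ≠ 0)
    {F : (Fin p → Fin K) → ℝ} {R : ℝ} (hF : ∀ k, weight φ K h μ k x ≠ 0 → |F k| ≤ R) :
    |∑ k, weight φ K h μ k x * F k| ≤ R :=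
  calc |∑ k, weight φ K h μ k x * F k| ≤ ∑ k, weight φ K h μ k x * R := by
        refine (Finset.abs_sum_le_sum_abs _ _).trans (Finset.sum_le_sum fun k _ => ?_)
        rw [abs_mul, abs_of_nonneg (weight_nonneg hφ k)]
        by_cases hw : weight φ K h μ k x = 0
        · rw [hw, zero_mul, zero_mul]
        · exact mul_le_mul_of_nonneg_left (hF k hw) (weight_nonneg hφ k)
    _ = R := by rw [← Finset.sum_mul, sum_weight hx, one_mul]

lemma pos_of_le_mul_bandwidth (hmin0 : 0 < hmin) (hh : hmin ≤ K * h) : 0 < K ∧ 0 < h := by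
  have hKh := hmin0.trans_le hh
  have hK : (0 : ℝ) < K :=
    (Nat.cast_nonneg K).lt_of_ne fun h0 => hKh.ne' (by rw [← h0, zero_mul])
  exact ⟨by exact_mod_cast hK, pos_of_mul_pos_right hKh hK.le⟩

/-- The block containing `x` has its center within `1 / K ≤ h / hmin` of `x`. -/
lemma kernel_le_kernelSum [Nonempty (Fin p)] (hφ : IsBoxedKernel φ) (hmin0 : 0 < hmin)
    (hh : hmin ≤ K * h) (hμ : ∀ k, μ k ∈ blockCl K k) (hx : x ∈ cube p) :
    φ (fun _ => 1 / hmin) ≤ kernelSum φ h μ x := by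
  obtain ⟨hK, hh0⟩ := pos_of_le_mul_bandwidth hmin0 hh
  obtain ⟨k, hk⟩ := exists_mem_blockCl hK hx
  have hbound : ∀ j, |x j - μ k j| / h ≤ 1 / hmin := fun j => by
    rw [div_le_div_iff₀ hh0 hmin0, one_mul]
    calc |x j - μ k j| * hmin ≤ 1 / K * (K * h) :=
          mul_le_mul (abs_sub_le_inv_of_mem_blockCl hk (hμ k) j) hh hmin0.le (by positivity)
      _ = h := by field_simp
  refine (hφ.2.2.2 _ _ ?_ : _ ≤ scaledKernel φ h (μ k) x).trans
    (Finset.single_le_sum (f := fun l => scaledKernel φ h (μ l) x) (fun l _ => (hφ.2.1 _).1)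
      (Finset.mem_univ k))
  rw [pi_norm_const, Real.norm_of_nonneg (by positivity),
    pi_norm_le_iff_of_nonneg (by positivity)]
  intro j
  rw [norm_div, Real.norm_eq_abs, Real.norm_of_nonneg hh0.le]
  exact hbound j

end KernelWeights

section KernelMixtures

variable {p m K : ℕ} {φ : (Fin p → ℝ) → ℝ} {h b : ℝ} {μ : (Fin p → Fin K) → Fin p → ℝ}
  {ξ : (Fin p → Fin K) → (Fin p → Fin (m + 1)) → ℝ} {x : Fin p → ℝ}

/-- The polynomial `∑_{|s| ≤ m} ξ_s (x - μ_k^⋆)^s` attached to the block `k`. -/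
def blockPoly (k : Fin p → Fin K) (ξ : (Fin p → Fin (m + 1)) → ℝ) (x : Fin p → ℝ) : ℝ :=
  ∑ s ∈ mIdx p m, ξ s * mono K m k s x

lemma kmpFun_eq_sum_weight_mul :
    kmpFun φ K m h μ ξ x = ∑ k, weight φ K h μ k x * blockPoly k (ξ k) x := by
  simp only [kmpFun, blockPoly, Finset.mul_sum]
  exact Finset.sum_congr rfl fun k _ => Finset.sum_congr rfl fun s _ => by ring

lemma measurable_kmpFun (hφ : IsBoxedKernel φ) : Measurable (kmpFun φ K m h μ ξ) := by
  have hφm : Measurable φ := hφ.1.measurable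
  unfold kmpFun weight mono
  fun_prop

lemma abs_mono_le_one (k : Fin p → Fin K) (s : Fin p → Fin (m + 1)) (hx : x ∈ cube p) :
    |mono K m k s x| ≤ 1 := by
  simp only [mono, Finset.abs_prod, abs_pow]
  exact Finset.prod_le_one (fun _ _ => by positivity) fun j _ => pow_le_one₀ (abs_nonneg _)
    (abs_sub_le_one_of_mem_cube hx (blockCl_subset_cube center_mem_blockCl) j)

lemma abs_blockPoly_le (k : Fin p → Fin K) {ξ : (Fin p → Fin (m + 1)) → ℝ}
    (hξ : ∀ s ∈ mIdx p m, |ξ s| ≤ b) (hx : x ∈ cube p) :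
    |blockPoly k ξ x| ≤ (mIdx p m).card * b := by
  refine (Finset.abs_sum_le_sum_abs _ _).trans ?_
  rw [← nsmul_eq_mul]
  refine Finset.sum_le_card_nsmul _ _ _ fun s hs => ?_
  rw [abs_mul]
  exact (mul_le_of_le_one_right (abs_nonneg _) (abs_mono_le_one k s hx)).trans (hξ s hs)

lemma abs_kmpFun_le (hφ : IsBoxedKernel φ) (hS : kernelSum φ h μ x ≠ 0)
    (hξ : ∀ k, ∀ s ∈ mIdx p m, |ξ k s| ≤ b) (hx : x ∈ cube p) :
    |kmpFun φ K m h μ ξ x| ≤ (mIdx p m).card * b := by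
  rw [kmpFun_eq_sum_weight_mul]
  exact abs_sum_weight_mul_le hφ hS fun k _ => abs_blockPoly_le k (hξ k) hx

end KernelMixtures

section SieveParameters

variable {p m K : ℕ} {φ : (Fin p → ℝ) → ℝ} {hmin hmax B : ℝ}

/-- The parameters of a kernel mixture of polynomials on the `K^p` blocks: the bandwidth `h`, the
centers `μ_k` and the coefficients `ξ_{ks}`. -/
structure SieveParam (p m K : ℕ) where
  bandwidth : ℝ
  centers : (Fin p → Fin K) → Fin p → ℝ
  coeff : (Fin p → Fin K) → (Fin p → Fin (m + 1)) → ℝ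

/-- The constraints on the parameters that define the sieve `G_K`. -/
structure SieveParam.IsAdmissible (hmin hmax B : ℝ) (θ : SieveParam p m K) : Prop where
  mul_bandwidth_mem : (K : ℝ) * θ.bandwidth ∈ Set.Icc hmin hmax
  centers_mem : ∀ k, θ.centers k ∈ blockCl K k
  abs_coeff_le : ∀ k, ∀ s ∈ mIdx p m, |θ.coeff k s| ≤ B

/-- The kernel mixture of polynomials with parameters `θ`. -/
def SieveParam.eval (φ : (Fin p → ℝ) → ℝ) (θ : SieveParam p m K) : (Fin p → ℝ) → ℝ :=
  kmpFun φ K m θ.bandwidth θ.centers θ.coeff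

lemma memSieve_iff {f : (Fin p → ℝ) → ℝ} :
    memSieve φ m B hmin hmax K f ↔
      ∃ θ : SieveParam p m K, θ.IsAdmissible hmin hmax B ∧ θ.eval φ = f := by
  constructor
  · rintro ⟨h, hh, μ, hμ, ξ, hξ, rfl⟩
    exact ⟨⟨h, μ, ξ⟩, ⟨hh, hμ, hξ⟩, rfl⟩
  · rintro ⟨θ, hθ, rfl⟩
    exact ⟨θ.bandwidth, hθ.1, θ.centers, hθ.2, θ.coeff, hθ.3, rfl⟩

lemma SieveParam.IsAdmissible.kernelSum_pos [Nonempty (Fin p)] (hφ : IsBoxedKernel φ)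
    (hφpos : 0 < φ fun _ => 1 / hmin) (hmin0 : 0 < hmin) {θ : SieveParam p m K}
    (hθ : θ.IsAdmissible hmin hmax B) {x : Fin p → ℝ} (hx : x ∈ cube p) :
    0 < kernelSum φ θ.bandwidth θ.centers x :=
  hφpos.trans_le (kernel_le_kernelSum hφ hmin0 hθ.mul_bandwidth_mem.1 hθ.centers_mem hx)

end SieveParameters

section SieveApproximation

variable {p m r K : ℕ} {φ f₀ : (Fin p → ℝ) → ℝ} {α B hmin hmax : ℝ}

lemma eucNorm_le (x : Fin p → ℝ) : eucNorm x ≤ √p * ‖x‖ := by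
  unfold eucNorm
  rw [← Real.sqrt_sq (norm_nonneg x), ← Real.sqrt_mul (Nat.cast_nonneg p)]
  refine Real.sqrt_le_sqrt ?_
  calc ∑ j, x j ^ 2 ≤ ∑ _j : Fin p, ‖x‖ ^ 2 := Finset.sum_le_sum fun j _ =>
        sq_le_sq' (neg_le_of_abs_le (norm_le_pi_norm x j)) (le_of_abs_le (norm_le_pi_norm x j))
    _ = p * ‖x‖ ^ 2 := by simp only [Finset.sum_const, Finset.card_univ, Fintype.card_fin,
        nsmul_eq_mul]

lemma hOrder_lt (hα : 0 < α) : (hOrder α : ℝ) < α := by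
  unfold hOrder
  rcases le_total 1 α with h | h
  · linarith [Nat.ceil_lt_add_one (sub_nonneg.2 h)]
  · rwa [Nat.ceil_eq_zero.2 (by linarith), Nat.cast_zero]

lemma sum_mIdx_ite_eq_sum_multiIndices (hr : r ≤ m) (F : (Fin p → ℕ) → ℝ) :
    ∑ s ∈ mIdx p m, (if deg s ≤ r then F (fun j => (s j : ℕ)) else 0)
      = ∑ s ∈ multiIndices p r, F s := by
  rw [← Finset.sum_filter]
  refine Finset.sum_nbij (fun s j => (s j : ℕ)) ?_ ?_ ?_ fun s _ => rfl
  · exact fun s hs => mem_multiIndices.2 (Finset.mem_filter.1 hs).2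
  · exact fun s _ t _ hst => funext fun j => Fin.ext (congrFun hst j)
  · intro s hs
    have hdeg : degN s ≤ r := mem_multiIndices.1 hs
    refine ⟨fun j => ⟨s j, by have := apply_le_degN s j; lia⟩, ?_, rfl⟩
    simp only [mIdx, Finset.coe_filter, Finset.mem_filter, Finset.mem_univ, true_and]
    exact ⟨hdeg.trans hr, hdeg⟩

/-- The coefficients of the Taylor polynomial of order `r` of `f` at the center of the block `k`,
in the monomials `(x - μ_k^⋆)^s` of a kernel mixture. -/
def taylorCoeff (m r : ℕ) (f : (Fin p → ℝ) → ℝ) (k : Fin p → Fin K) (s : Fin p → Fin (m + 1)) :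
    ℝ :=
  if deg s ≤ r then
    mderiv (fun j => (s j : ℕ)) f (center K k) / ∏ j, ((s j : ℕ).factorial : ℝ)
  else 0

lemma blockPoly_taylorCoeff (hr : r ≤ m) (k : Fin p → Fin K) (x : Fin p → ℝ) :
    blockPoly k (taylorCoeff m r f₀ k) x = taylorPoly r f₀ (center K k) x := by
  rw [taylorPoly, ← sum_mIdx_ite_eq_sum_multiIndices hr]
  refine Finset.sum_congr rfl fun s _ => ?_
  simp only [taylorCoeff, mono, taylorMonomial, Finset.prod_div_distrib, ite_mul, zero_mul]
  split_ifs <;> ring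

lemma abs_taylorCoeff_le {b : ℝ} (hb : 0 ≤ b)
    (hf : ∀ s : Fin p → ℕ, degN s ≤ r → ∀ x ∈ cube p, |mderiv s f₀ x| ≤ b)
    (k : Fin p → Fin K) (s : Fin p → Fin (m + 1)) : |taylorCoeff m r f₀ k s| ≤ b := by
  unfold taylorCoeff
  split_ifs with hs
  · have hfact : (1 : ℝ) ≤ ∏ j, ((s j : ℕ).factorial : ℝ) := by
      exact_mod_cast Nat.succ_le_of_lt (Finset.prod_pos fun j _ => Nat.factorial_pos (s j))
    rw [abs_div, abs_of_nonneg (zero_le_one.trans hfact)]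
    exact (div_le_self (abs_nonneg _) hfact).trans
      (hf _ hs _ (blockCl_subset_cube center_mem_blockCl))
  · rwa [abs_zero]

lemma convex_cube : Convex ℝ (cube p) := by
  intro x hx y hy a b ha hb hab j
  have hj := convex_Icc (0 : ℝ) 1 (hx j) (hy j) ha hb hab
  exact hj

lemma IsHolder.abs_le (hf₀ : IsHolder p α B f₀) {x : Fin p → ℝ} (hx : x ∈ cube p) :
    |f₀ x| ≤ B := by
  obtain ⟨-, B₁, B₂, -, hB₂, hB, hderiv, -⟩ := hf₀
  have hbound := hderiv 0 (by simp [degN]) x hx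
  rw [mderiv_zero] at hbound
  linarith

lemma IsHolder.exists_abs_sub_taylorPoly_le (hα : 0 < α) (hf₀ : IsHolder p α B f₀) :
    ∃ L, 0 ≤ L ∧ ∀ a ∈ cube p, ∀ x ∈ cube p,
      |f₀ x - taylorPoly (hOrder α) f₀ a x| ≤ L * ‖x - a‖ ^ α := by
  obtain ⟨hdiff, -, B₂, -, hB₂, -, -, hHolder⟩ := hf₀
  have hβ : 0 < α - hOrder α := sub_pos.2 (hOrder_lt hα)
  refine ⟨p ^ hOrder α * (B₂ * √p ^ (α - hOrder α)), by positivity, fun a ha x hx => ?_⟩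
  have hsup : ∀ s : Fin p → ℕ, degN s = hOrder α → ∀ x ∈ cube p, ∀ y ∈ cube p,
      |mderiv s f₀ x - mderiv s f₀ y|
        ≤ B₂ * √p ^ (α - hOrder α) * ‖x - y‖ ^ (α - hOrder α) := by
    intro s hs x hx y hy
    rcases eq_or_ne x y with rfl | hxy
    · rw [sub_self, abs_zero]
      positivity
    refine (hHolder s hs x hx y hy hxy).trans ?_
    rw [hs, mul_assoc, ← mul_rpow (by positivity) (norm_nonneg _)]
    have heuc : 0 ≤ eucNorm (x - y) := Real.sqrt_nonneg _
    gcongr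
    exact eucNorm_le _
  simpa only [add_sub_cancel] using
    abs_sub_taylorPoly_le convex_cube (by positivity) hβ.le (by exact_mod_cast hdiff) hsup ha hx

/-- With the block centers, the bandwidth `hmin / K` and the Taylor coefficients of `f₀` at the
block centers, the error is a weighted average of Taylor remainders at points within `hmin / K`. -/
lemma IsHolder.exists_memSieve_abs_sub_le [Nonempty (Fin p)] (hα : 0 < α)
    (hf₀ : IsHolder p α B f₀) (hm : hOrder α ≤ m) (hφ : IsBoxedKernel φ)
    (hφpos : 0 < φ fun _ => 1 / hmin) (hmin0 : 0 < hmin) (hh : hmin ≤ hmax) :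
    ∃ L, 0 ≤ L ∧ ∀ K : ℕ, 0 < K → ∃ f, memSieve φ m B hmin hmax K f ∧
      ∀ x ∈ cube p, |f x - f₀ x| ≤ L * (K : ℝ) ^ (-α) := by
  obtain ⟨L, hL, hTaylor⟩ := hf₀.exists_abs_sub_taylorPoly_le hα
  obtain ⟨-, B₁, B₂, hB₁, hB₂, hB, hderiv, -⟩ := hf₀
  refine ⟨L * hmin ^ α, by positivity, fun K hK => ?_⟩
  have hK' : (0 : ℝ) < K := by exact_mod_cast hK
  let θ : SieveParam p m K := ⟨hmin / K, center K, taylorCoeff m (hOrder α) f₀⟩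
  have hθ : θ.IsAdmissible hmin hmax B :=
    ⟨by rw [mul_div_cancel₀ _ hK'.ne']; exact ⟨le_rfl, hh⟩, fun k => center_mem_blockCl,
      fun k s _ => (abs_taylorCoeff_le hB₁ hderiv k s).trans (by linarith)⟩
  refine ⟨θ.eval φ, memSieve_iff.2 ⟨θ, hθ, rfl⟩, fun x hx => ?_⟩
  have hS := (hθ.kernelSum_pos hφ hφpos hmin0 hx).ne'
  have haverage : θ.eval φ x - f₀ x = ∑ k, weight φ K (hmin / K) (center K) k x *
      (taylorPoly (hOrder α) f₀ (center K k) x - f₀ x) := by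
    simp only [mul_sub, Finset.sum_sub_distrib, ← Finset.sum_mul]
    rw [sum_weight hS, one_mul, SieveParam.eval, kmpFun_eq_sum_weight_mul]
    simp only [θ, blockPoly_taylorCoeff hm]
  rw [haverage]
  refine abs_sum_weight_mul_le hφ hS fun k hk => ?_
  have hnear : ‖x - center K k‖ ≤ hmin / K :=
    norm_sub_le_of_weight_ne_zero hφ (by positivity) hk
  calc |taylorPoly (hOrder α) f₀ (center K k) x - f₀ x| ≤ L * ‖x - center K k‖ ^ α := by
        rw [abs_sub_comm]
        exact hTaylor _ (blockCl_subset_cube center_mem_blockCl) x hx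
    _ ≤ L * (hmin / K) ^ α := by gcongr
    _ = L * hmin ^ α * (K : ℝ) ^ (-α) := by
        rw [div_rpow hmin0.le hK'.le, rpow_neg hK'.le]
        ring

end SieveApproximation

section RadialProfile

variable {p : ℕ} {φ : (Fin p → ℝ) → ℝ} {η : ℝ}

/-- The kernel value at sup-norm radius `t`, extended to negative `t` by its value at `0`. -/
def radialProfile (φ : (Fin p → ℝ) → ℝ) (t : ℝ) : ℝ :=
  φ fun _ => max t 0

/-- The oscillation of the radial profile over the interval `[t - η, t + η]`. -/
def radialOsc (φ : (Fin p → ℝ) → ℝ) (η t : ℝ) : ℝ :=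
  radialProfile φ (t - η) - radialProfile φ (t + η)

lemma continuous_radialProfile (hφ : IsBoxedKernel φ) : Continuous (radialProfile φ) :=
  hφ.1.comp (by fun_prop)

lemma abs_radialProfile_le_one (hφ : IsBoxedKernel φ) (t : ℝ) : |radialProfile φ t| ≤ 1 := by
  rw [radialProfile, abs_of_nonneg (hφ.2.1 _).1]
  exact (hφ.2.1 _).2

lemma continuous_radialOsc (hφ : IsBoxedKernel φ) : Continuous (radialOsc φ η) := by
  have := continuous_radialProfile hφ
  unfold radialOsc
  fun_prop

lemma integrable_radialOsc_comp (hφ : IsBoxedKernel φ) {𝓧 : Type*} [MeasurableSpace 𝓧]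
    {ν : Measure 𝓧} [IsFiniteMeasure ν] {g : 𝓧 → ℝ} (hg : Measurable g) :
    Integrable (fun x => radialOsc φ η (g x)) ν := by
  refine .of_bound ((continuous_radialOsc hφ).measurable.comp hg).aestronglyMeasurable 2
    (Eventually.of_forall fun x => ?_)
  calc ‖radialOsc φ η (g x)‖ ≤ 1 + 1 := (abs_sub _ _).trans
        (add_le_add (abs_radialProfile_le_one hφ _) (abs_radialProfile_le_one hφ _))
    _ = 2 := one_add_one_eq_two

variable [Nonempty (Fin p)]

lemma norm_const_max_zero (t : ℝ) : ‖fun _ : Fin p => max t 0‖ = max t 0 := by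
  rw [pi_norm_const, Real.norm_of_nonneg (le_max_right _ _)]

lemma antitone_radialProfile (hφ : IsBoxedKernel φ) : Antitone (radialProfile φ) := by
  intro a b hab
  apply hφ.2.2.2
  rw [norm_const_max_zero, norm_const_max_zero]
  exact max_le_max_right 0 hab

lemma radialProfile_norm (hφ : IsBoxedKernel φ) (u : Fin p → ℝ) : radialProfile φ ‖u‖ = φ u := by
  have hnorm : ‖fun _ : Fin p => max ‖u‖ 0‖ = ‖u‖ := by
    rw [norm_const_max_zero, max_eq_left (norm_nonneg u)]
  exact le_antisymm (hφ.2.2.2 _ _ hnorm.ge) (hφ.2.2.2 _ _ hnorm.le)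

lemma radialOsc_nonneg (hφ : IsBoxedKernel φ) (hη : 0 ≤ η) (t : ℝ) : 0 ≤ radialOsc φ η t :=
  sub_nonneg.2 (antitone_radialProfile hφ (by linarith))

lemma abs_sub_le_radialOsc_norm (hφ : IsBoxedKernel φ) {u v : Fin p → ℝ} (huv : ‖u - v‖ ≤ η) :
    |φ u - φ v| ≤ radialOsc φ η ‖v‖ := by
  have hη : 0 ≤ η := (norm_nonneg _).trans huv
  have hnorm := abs_le.1 ((abs_norm_sub_norm_le u v).trans huv)
  have hanti := antitone_radialProfile hφ
  rw [← radialProfile_norm hφ u, ← radialProfile_norm hφ v, radialOsc]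
  refine abs_sub_le_of_le_of_le (hanti ?_) (hanti ?_) (hanti ?_) (hanti ?_) <;> linarith

/-- The sup norm of `v` is one of the values `± v j`; summing over all of them gives a bound whose
integral in `v` reduces to one-dimensional integrals. -/
lemma abs_sub_le_sum_radialOsc (hφ : IsBoxedKernel φ) {u v : Fin p → ℝ} (huv : ‖u - v‖ ≤ η) :
    |φ u - φ v| ≤ ∑ j, (radialOsc φ η (v j) + radialOsc φ η (-v j)) := by
  have hosc := radialOsc_nonneg hφ ((norm_nonneg _).trans huv)
  obtain ⟨j, hj⟩ : ∃ j, |v j| = ‖v‖ := by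
    obtain ⟨j, hj⟩ := Finite.exists_max fun j => |v j|
    exact ⟨j, le_antisymm (norm_le_pi_norm v j)
      ((pi_norm_le_iff_of_nonneg (abs_nonneg (v j))).2 hj)⟩
  calc |φ u - φ v| ≤ radialOsc φ η |v j| := by
        rw [hj]
        exact abs_sub_le_radialOsc_norm hφ huv
    _ ≤ radialOsc φ η (v j) + radialOsc φ η (-v j) := by
        rcases abs_choice (v j) with h | h <;> rw [h] <;> linarith [hosc (v j), hosc (-v j)]
    _ ≤ ∑ j, (radialOsc φ η (v j) + radialOsc φ η (-v j)) :=
        Finset.single_le_sum (f := fun j => radialOsc φ η (v j) + radialOsc φ η (-v j))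
          (fun i _ => add_nonneg (hosc _) (hosc _)) (Finset.mem_univ j)

end RadialProfile

section OscillationIntegrals

/-- The two shifted integrals over `[x, y]` cancel except on two intervals of length `2 |a|` around
the endpoints. -/
lemma integral_sub_add_translate_le {H : ℝ → ℝ} (hH : Continuous H) {b : ℝ} (hb : ∀ t, |H t| ≤ b)
    (a x y : ℝ) : ∫ t in x..y, (H (t - a) - H (t + a)) ≤ 4 * b * |a| := by
  have hInt : ∀ s t, IntervalIntegrable H volume s t := fun s t => hH.intervalIntegrable s t
  have hshort : ∀ z, |∫ t in (z - a)..(z + a), H t| ≤ 2 * b * |a| := fun z => by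
    refine (intervalIntegral.norm_integral_le_of_norm_le_const (f := H) fun t _ => hb t).trans_eq ?_
    rw [show z + a - (z - a) = 2 * a by ring, abs_mul, abs_two]
    ring
  calc ∫ t in x..y, (H (t - a) - H (t + a))
      = (∫ t in (x - a)..(y - a), H t) - ∫ t in (x + a)..(y + a), H t := by
        rw [intervalIntegral.integral_sub, intervalIntegral.integral_comp_sub_right,
          intervalIntegral.integral_comp_add_right] <;>
        exact Continuous.intervalIntegrable (by fun_prop) _ _
    _ = (∫ t in (x - a)..(x + a), H t) - ∫ t in (y - a)..(y + a), H t :=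
        intervalIntegral.integral_interval_sub_interval_comm (hInt _ _) (hInt _ _) (hInt _ _)
    _ ≤ 4 * b * |a| := by linarith [(abs_le.1 (hshort x)).2, (abs_le.1 (hshort y)).1]

lemma cube_eq_pi (p : ℕ) : cube p = Set.univ.pi fun _ => Set.Icc (0 : ℝ) 1 :=
  Set.ext fun _ => ⟨fun h j _ => h j, fun h j => h j trivial⟩

lemma measurableSet_cube (p : ℕ) : MeasurableSet (cube p) := by
  rw [cube_eq_pi]
  exact .univ_pi fun _ => measurableSet_Icc

lemma volume_cube (p : ℕ) : volume (cube p) = 1 := by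
  rw [cube_eq_pi, volume_pi_pi]
  simp only [Real.volume_Icc, sub_zero, ENNReal.ofReal_one, Finset.prod_const_one]

lemma setIntegral_cube_comp_eval {p : ℕ} (j : Fin p) {g : ℝ → ℝ} (hg : Continuous g) :
    ∫ x in cube p, g (x j) = ∫ t in (0 : ℝ)..1, g t := by
  have hprob : IsProbabilityMeasure (volume.restrict (Set.Icc (0 : ℝ) 1)) :=
    ⟨by rw [Measure.restrict_apply_univ, Real.volume_Icc, sub_zero, ENNReal.ofReal_one]⟩
  have heval := measurePreserving_eval (fun _ : Fin p => volume.restrict (Set.Icc (0 : ℝ) 1)) j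
  calc ∫ x in cube p, g (x j)
      = ∫ x, g (x j) ∂Measure.pi fun _ : Fin p => volume.restrict (Set.Icc (0 : ℝ) 1) := by
        rw [cube_eq_pi, volume_pi, Measure.restrict_pi_pi]
    _ = ∫ t in Set.Icc (0 : ℝ) 1, g t :=
        (integral_map heval.measurable.aemeasurable hg.aestronglyMeasurable).symm.trans
          (by rw [heval.map_eq])
    _ = ∫ t in (0 : ℝ)..1, g t := by
        rw [intervalIntegral.integral_of_le zero_le_one, integral_Icc_eq_integral_Ioc]

variable {p : ℕ} {φ : (Fin p → ℝ) → ℝ} {η h : ℝ} {C : ℝ≥0} {ν : Measure (Fin p → ℝ)}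

lemma intervalIntegral_radialOsc_le (hφ : IsBoxedKernel φ) {c : ℝ} (hc : c ≠ 0) (d x y : ℝ) :
    ∫ t in x..y, radialOsc φ η (c * t + d) ≤ 4 * |η / c| := by
  have hprofile := continuous_radialProfile hφ
  have htranslate := integral_sub_add_translate_le (H := fun t => radialProfile φ (c * t + d))
    (by fun_prop) (fun t => abs_radialProfile_le_one hφ _) (η / c) x y
  rw [mul_one] at htranslate
  convert htranslate using 4 with t
  simp only [radialOsc]
  congr 2 <;> field_simp <;> ring

lemma integral_radialOsc_le [Nonempty (Fin p)] (hφ : IsBoxedKernel φ)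
    (hν : ν ≤ C • volume.restrict (cube p)) (hη : 0 ≤ η) {c : ℝ} (hc : c ≠ 0) (d : ℝ) (j : Fin p) :
    ∫ x, radialOsc φ η (c * x j + d) ∂ν ≤ C * (4 * |η / c|) := by
  have hfin : IsFiniteMeasure (volume.restrict (cube p)) :=
    ⟨by rw [Measure.restrict_apply_univ, volume_cube]; exact ENNReal.one_lt_top⟩
  have hosc : Continuous fun t => radialOsc φ η (c * t + d) :=
    (continuous_radialOsc hφ).comp (by fun_prop)
  calc ∫ x, radialOsc φ η (c * x j + d) ∂ν
      ≤ ∫ x, radialOsc φ η (c * x j + d) ∂(C • volume.restrict (cube p)) :=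
        integral_mono_measure hν (Eventually.of_forall fun x => radialOsc_nonneg hφ hη _)
          (integrable_radialOsc_comp hφ (by fun_prop))
    _ = C * ∫ t in (0 : ℝ)..1, radialOsc φ η (c * t + d) := by
        rw [integral_smul_nnreal_measure, setIntegral_cube_comp_eval j hosc]
        rfl
    _ ≤ C * (4 * |η / c|) := by
        gcongr
        exact intervalIntegral_radialOsc_le hφ hc d 0 1

/-- A bound, at the point `x`, for the change of the rescaled kernel `φ_h(x - c)` when its argument
`(x - c) / h` moves by at most `η` in sup norm. -/
def kernelEnvelope (φ : (Fin p → ℝ) → ℝ) (η h : ℝ) (c x : Fin p → ℝ) : ℝ :=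
  ∑ j, (radialOsc φ η ((x j - c j) / h) + radialOsc φ η (-((x j - c j) / h)))

lemma kernelEnvelope_nonneg [Nonempty (Fin p)] (hφ : IsBoxedKernel φ) (hη : 0 ≤ η)
    (c x : Fin p → ℝ) : 0 ≤ kernelEnvelope φ η h c x :=
  Finset.sum_nonneg fun _ _ => add_nonneg (radialOsc_nonneg hφ hη _) (radialOsc_nonneg hφ hη _)

lemma integrable_kernelEnvelope (hφ : IsBoxedKernel φ) [IsFiniteMeasure ν] (c : Fin p → ℝ) :
    Integrable (kernelEnvelope φ η h c) ν :=
  integrable_finsetSum _ fun j _ => (integrable_radialOsc_comp hφ (by fun_prop)).add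
    (integrable_radialOsc_comp hφ (by fun_prop))

lemma integral_kernelEnvelope_le [Nonempty (Fin p)] (hφ : IsBoxedKernel φ) [IsFiniteMeasure ν]
    (hν : ν ≤ C • volume.restrict (cube p)) (hη : 0 ≤ η) (hh : 0 < h) (c : Fin p → ℝ) :
    ∫ x, kernelEnvelope φ η h c x ∂ν ≤ p * (8 * C * (η * h)) := by
  have hcoord : ∀ j, ∫ x, radialOsc φ η ((x j - c j) / h) ∂ν ≤ C * (4 * (η * h)) := fun j => by
    have hosc := integral_radialOsc_le hφ hν hη (inv_ne_zero hh.ne') (-(c j / h)) j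
    rw [div_inv_eq_mul, abs_of_nonneg (by positivity)] at hosc
    convert hosc using 4 with x
    ring
  have hcoord_neg : ∀ j, ∫ x, radialOsc φ η (-((x j - c j) / h)) ∂ν ≤ C * (4 * (η * h)) :=
    fun j => by
    have hosc := integral_radialOsc_le hφ hν hη (neg_ne_zero.2 (inv_ne_zero hh.ne')) (c j / h) j
    rw [div_neg, abs_neg, div_inv_eq_mul, abs_of_nonneg (by positivity)] at hosc
    convert hosc using 4 with x
    ring
  have hInt : ∀ {g : (Fin p → ℝ) → ℝ}, Measurable g →
      Integrable (fun x => radialOsc φ η (g x)) ν := integrable_radialOsc_comp hφ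
  calc ∫ x, kernelEnvelope φ η h c x ∂ν
      = ∑ j, (∫ x, radialOsc φ η ((x j - c j) / h) ∂ν
          + ∫ x, radialOsc φ η (-((x j - c j) / h)) ∂ν) := by
        unfold kernelEnvelope
        rw [integral_finsetSum _ fun j _ => Integrable.fun_add (hInt (by fun_prop))
          (hInt (by fun_prop))]
        exact Finset.sum_congr rfl fun j _ => integral_add (hInt (by fun_prop)) (hInt (by fun_prop))
    _ ≤ ∑ _j : Fin p, 8 * C * (η * h) :=
        Finset.sum_le_sum fun j _ => by linarith [hcoord j, hcoord_neg j]
    _ = p * (8 * C * (η * h)) := by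
        rw [Finset.sum_const, Finset.card_univ, Fintype.card_fin, nsmul_eq_mul]

end OscillationIntegrals

section MixturePerturbation

variable {p m K : ℕ} {φ : (Fin p → ℝ) → ℝ} {h h' b δ κ : ℝ} {μ μ' : (Fin p → Fin K) → Fin p → ℝ}
  {ξ ξ' : (Fin p → Fin K) → (Fin p → Fin (m + 1)) → ℝ} {x : Fin p → ℝ} {E : (Fin p → Fin K) → ℝ}

lemma abs_div_sub_div_le {a a' S S' : ℝ} (hS : 0 < S) (hS' : 0 < S') (ha' : 0 ≤ a') :
    |a / S - a' / S'| ≤ |a - a'| / S + a' / S' * (|S - S'| / S) := by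
  have hsplit : a / S - a' / S' = (a - a') / S - a' / S' * ((S - S') / S) := by
    field_simp
    ring
  calc |a / S - a' / S'| ≤ |(a - a') / S| + |a' / S' * ((S - S') / S)| := by
        rw [hsplit]
        exact abs_sub _ _
    _ = |a - a'| / S + a' / S' * (|S - S'| / S) := by
        rw [abs_mul, abs_div, abs_div (S - S'), abs_of_pos hS,
          abs_of_nonneg (div_nonneg ha' hS'.le)]

lemma sum_abs_weight_sub_le (hφ : IsBoxedKernel φ) (hκ : 0 < κ) (hS : κ ≤ kernelSum φ h μ x)
    (hS' : 0 < kernelSum φ h' μ' x)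
    (hE : ∀ k, |scaledKernel φ h (μ k) x - scaledKernel φ h' (μ' k) x| ≤ E k) :
    ∑ k, |weight φ K h μ k x - weight φ K h' μ' k x| ≤ 2 / κ * ∑ k, E k := by
  have hE0 : 0 ≤ ∑ k, E k := Finset.sum_nonneg fun k _ => (abs_nonneg _).trans (hE k)
  have hsum : |kernelSum φ h μ x - kernelSum φ h' μ' x| ≤ ∑ k, E k := by
    rw [kernelSum, kernelSum, ← Finset.sum_sub_distrib]
    exact (Finset.abs_sum_le_sum_abs _ _).trans (Finset.sum_le_sum fun k _ => hE k)
  calc ∑ k, |weight φ K h μ k x - weight φ K h' μ' k x|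
      ≤ ∑ k, (|scaledKernel φ h (μ k) x - scaledKernel φ h' (μ' k) x| / kernelSum φ h μ x +
          weight φ K h' μ' k x * (|kernelSum φ h μ x - kernelSum φ h' μ' x| / kernelSum φ h μ x)) :=
        Finset.sum_le_sum fun k _ => abs_div_sub_div_le (hκ.trans_le hS) hS' (hφ.2.1 _).1
    _ = (∑ k, |scaledKernel φ h (μ k) x - scaledKernel φ h' (μ' k) x|) / kernelSum φ h μ x +
          |kernelSum φ h μ x - kernelSum φ h' μ' x| / kernelSum φ h μ x := by
        rw [Finset.sum_add_distrib, ← Finset.sum_mul, sum_weight hS'.ne', ← Finset.sum_div, one_mul]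
    _ ≤ (∑ k, E k) / κ + (∑ k, E k) / κ := by
        gcongr with k
        exact hE k
    _ = 2 / κ * ∑ k, E k := by ring

lemma blockPoly_sub (k : Fin p → Fin K) (ξ ξ' : (Fin p → Fin (m + 1)) → ℝ) :
    blockPoly k ξ x - blockPoly k ξ' x = blockPoly k (ξ - ξ') x := by
  simp only [blockPoly, ← Finset.sum_sub_distrib, ← sub_mul, Pi.sub_apply]

/-- `f - f'` splits into a weighted average of `P_k - P_k'` and the sum of `(w_k - w_k') P_k'`. -/
lemma abs_kmpFun_sub_le (hφ : IsBoxedKernel φ) (hκ : 0 < κ) (hS : κ ≤ kernelSum φ h μ x)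
    (hS' : 0 < kernelSum φ h' μ' x)
    (hE : ∀ k, |scaledKernel φ h (μ k) x - scaledKernel φ h' (μ' k) x| ≤ E k) (hb : 0 ≤ b)
    (hξ' : ∀ k, ∀ s ∈ mIdx p m, |ξ' k s| ≤ b) (hδ : ∀ k, ∀ s ∈ mIdx p m, |ξ k s - ξ' k s| ≤ δ)
    (hx : x ∈ cube p) :
    |kmpFun φ K m h μ ξ x - kmpFun φ K m h' μ' ξ' x|
      ≤ (mIdx p m).card * (δ + b * (2 / κ * ∑ k, E k)) := by
  have hpoly : |∑ k, weight φ K h μ k x * (blockPoly k (ξ k) x - blockPoly k (ξ' k) x)|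
      ≤ (mIdx p m).card * δ :=
    abs_sum_weight_mul_le hφ (hκ.trans_le hS).ne' fun k _ => by
      rw [blockPoly_sub]
      exact abs_blockPoly_le k (hδ k) hx
  have hweight : |∑ k, (weight φ K h μ k x - weight φ K h' μ' k x) * blockPoly k (ξ' k) x|
      ≤ (∑ k, |weight φ K h μ k x - weight φ K h' μ' k x|) * ((mIdx p m).card * b) := by
    rw [Finset.sum_mul]
    refine (Finset.abs_sum_le_sum_abs _ _).trans (Finset.sum_le_sum fun k _ => ?_)
    rw [abs_mul]
    exact mul_le_mul_of_nonneg_left (abs_blockPoly_le k (hξ' k) hx) (abs_nonneg _)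
  calc |kmpFun φ K m h μ ξ x - kmpFun φ K m h' μ' ξ' x|
      = |∑ k, weight φ K h μ k x * (blockPoly k (ξ k) x - blockPoly k (ξ' k) x) +
          ∑ k, (weight φ K h μ k x - weight φ K h' μ' k x) * blockPoly k (ξ' k) x| := by
        rw [kmpFun_eq_sum_weight_mul, kmpFun_eq_sum_weight_mul, ← Finset.sum_sub_distrib,
          ← Finset.sum_add_distrib]
        congr 1
        exact Finset.sum_congr rfl fun k _ => by ring
    _ ≤ (mIdx p m).card * δ + 2 / κ * (∑ k, E k) * ((mIdx p m).card * b) := by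
        refine (abs_add_le _ _).trans (add_le_add hpoly (hweight.trans ?_))
        gcongr
        exact sum_abs_weight_sub_le hφ hκ hS hS' hE
    _ = (mIdx p m).card * (δ + b * (2 / κ * ∑ k, E k)) := by ring

end MixturePerturbation

section FiniteCovers

variable {Θ κ ι : Type*} {G : Set Θ}

lemma exists_finset_subset_forall_exists_eq {key : Θ → κ} {s : Finset κ}
    (hkey : Set.MapsTo key G s) :
    ∃ t : Finset Θ, ↑t ⊆ G ∧ t.card ≤ s.card ∧ ∀ θ ∈ G, ∃ θ' ∈ t, key θ' = key θ := by
  obtain ⟨t, htG, hbij⟩ := Set.exists_subset_bijOn G key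
  have hfin : t.Finite := Set.Finite.of_injOn (fun θ hθ => hkey (htG hθ)) hbij.injOn s.finite_toSet
  refine ⟨hfin.toFinset, by rwa [hfin.coe_toFinset], ?_, fun θ hθ => ?_⟩
  · exact Finset.card_le_card_of_injOn key (fun θ hθ => hkey (htG (hfin.mem_toFinset.1 hθ)))
      (by rw [hfin.coe_toFinset]; exact hbij.injOn)
  · obtain ⟨θ', hθ', heq⟩ := hbij.surjOn (Set.mem_image_of_mem key hθ)
    exact ⟨θ', hfin.mem_toFinset.2 hθ', heq⟩

lemma abs_sub_le_of_floor_div_eq {a b R δ : ℝ} (hδ : 0 < δ) (ha : |a| ≤ R) (hb : |b| ≤ R)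
    (h : ⌊(a + R) / δ⌋₊ = ⌊(b + R) / δ⌋₊) : |a - b| ≤ δ := by
  have hfloor : ∀ {c : ℝ}, |c| ≤ R →
      ⌊(c + R) / δ⌋₊ * δ ≤ c + R ∧ c + R < (⌊(c + R) / δ⌋₊ + 1) * δ := fun {c} hc => by
    have hnonneg : 0 ≤ c + R := by linarith [(abs_le.1 hc).1]
    exact ⟨(le_div_iff₀ hδ).1 (Nat.floor_le (by positivity)),
      (div_lt_iff₀ hδ).1 (Nat.lt_floor_add_one _)⟩
  have ha' := hfloor ha
  rw [h] at ha'
  exact abs_le.2 ⟨by linarith [hfloor hb], by linarith [hfloor hb]⟩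

lemma exists_finset_subset_forall_norm_sub_le [Fintype ι] {v : Θ → ι → ℝ} {R δ : ℝ} {N : ℕ}
    (hδ : 0 < δ) (hv : ∀ θ ∈ G, ‖v θ‖ ≤ R) (hN : 2 * R / δ ≤ N) :
    ∃ t : Finset Θ, ↑t ⊆ G ∧ t.card ≤ (N + 1) ^ Fintype.card ι ∧
      ∀ θ ∈ G, ∃ θ' ∈ t, ‖v θ - v θ'‖ ≤ δ := by
  have hcoord : ∀ θ ∈ G, ∀ i, |v θ i| ≤ R := fun θ hθ i => (norm_le_pi_norm _ i).trans (hv θ hθ)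
  have hcells : Set.MapsTo (fun θ i => ⌊(v θ i + R) / δ⌋₊) G
      (Fintype.piFinset fun _ : ι => Finset.range (N + 1)) := fun θ hθ => by
    refine Fintype.mem_piFinset.2 fun i => Finset.mem_range_succ_iff.2 (Nat.floor_le_of_le ?_)
    refine le_trans ?_ hN
    gcongr
    linarith [(abs_le.1 (hcoord θ hθ i)).2]
  obtain ⟨t, htG, hcard, ht⟩ := exists_finset_subset_forall_exists_eq hcells
  rw [Fintype.card_piFinset, Finset.prod_const, Finset.card_range, Finset.card_univ] at hcard
  refine ⟨t, htG, hcard, fun θ hθ => ?_⟩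
  obtain ⟨θ', hθ', heq⟩ := ht θ hθ
  exact ⟨θ', hθ', (pi_norm_le_iff_of_nonneg hδ.le).2 fun i => abs_sub_le_of_floor_div_eq hδ
    (hcoord θ hθ i) (hcoord θ' (htG hθ') i) (congrFun heq i).symm⟩

end FiniteCovers

section SieveBrackets

variable {p m K : ℕ} {φ : (Fin p → ℝ) → ℝ} {hmin hmax B δ : ℝ}

lemma abs_scaledKernel_sub_le [Nonempty (Fin p)] (hφ : IsBoxedKernel φ) {h h' H : ℝ}
    {c c' x : Fin p → ℝ} (hx : x ∈ cube p) (hc : c ∈ cube p) (hh : |h⁻¹ - h'⁻¹| ≤ δ)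
    (hcc' : ‖c - c'‖ ≤ δ) (hH : |h'⁻¹| ≤ H) :
    |scaledKernel φ h c x - scaledKernel φ h' c' x| ≤ kernelEnvelope φ (δ * (H + 1)) h' c' x := by
  have hδ : 0 ≤ δ := (norm_nonneg _).trans hcc'
  have hH0 : 0 ≤ H := (abs_nonneg _).trans hH
  refine abs_sub_le_sum_radialOsc hφ ((pi_norm_le_iff_of_nonneg (by positivity)).2 fun j => ?_)
  calc |(x j - c j) / h - (x j - c' j) / h'|
      = |(x j - c j) * (h⁻¹ - h'⁻¹) - (c j - c' j) * h'⁻¹| := by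
        congr 1
        ring
    _ ≤ |x j - c j| * |h⁻¹ - h'⁻¹| + |c j - c' j| * |h'⁻¹| := by
        rw [← abs_mul, ← abs_mul]
        exact abs_sub _ _
    _ ≤ 1 * δ + δ * H := by
        gcongr
        · exact abs_sub_le_one_of_mem_cube hx hc j
        · exact (norm_le_pi_norm (c - c') j).trans hcc'
    _ = δ * (H + 1) := by ring

namespace SieveParam

/-- The parameters as a real vector, on which the sieve is discretized. The bandwidth enters through
its inverse because the kernel arguments `(x - μ_k) / h` are Lipschitz in `h⁻¹`. -/
def coord (θ : SieveParam p m K) : Option ((Fin p → Fin K) × (Fin p ⊕ mIdx p m)) → ℝ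
  | none => θ.bandwidth⁻¹
  | some (k, .inl j) => θ.centers k j
  | some (k, .inr s) => θ.coeff k s

/-- A bound, at the point `x`, for the change of the mixture with parameters `θ` when these move by
at most `δ`, if the normalizing sums are at least `κ` and the coefficients at most `B`. -/
def envelope (φ : (Fin p → ℝ) → ℝ) (κ B δ : ℝ) (θ : SieveParam p m K) (x : Fin p → ℝ) : ℝ :=
  (mIdx p m).card *
    (δ + B * (2 / κ * ∑ k, kernelEnvelope φ (δ * (K + 1)) θ.bandwidth (θ.centers k) x))

variable {θ θ' : SieveParam p m K}

lemma measurable_eval (hφ : IsBoxedKernel φ) : Measurable (θ.eval φ) :=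
  measurable_kmpFun hφ

lemma envelope_nonneg [Nonempty (Fin p)] (hφ : IsBoxedKernel φ) {κ : ℝ} (hκ : 0 ≤ κ) (hB : 0 ≤ B)
    (hδ : 0 ≤ δ) (x : Fin p → ℝ) : 0 ≤ θ.envelope φ κ B δ x := by
  have hsum : 0 ≤ ∑ k, kernelEnvelope φ (δ * (K + 1)) θ.bandwidth (θ.centers k) x :=
    Finset.sum_nonneg fun k _ => kernelEnvelope_nonneg hφ (by positivity) _ _
  unfold envelope
  positivity

lemma measurable_envelope (hφ : IsBoxedKernel φ) {κ : ℝ} : Measurable (θ.envelope φ κ B δ) := by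
  have hosc : ∀ η, Measurable (radialOsc φ η) := fun η => (continuous_radialOsc hφ).measurable
  unfold envelope kernelEnvelope
  fun_prop

lemma integrable_envelope (hφ : IsBoxedKernel φ) {κ : ℝ} {ν : Measure (Fin p → ℝ)}
    [IsFiniteMeasure ν] : Integrable (θ.envelope φ κ B δ) ν :=
  ((integrable_const δ).add (((integrable_finsetSum _ fun k _ =>
    integrable_kernelEnvelope hφ (θ.centers k)).const_mul _).const_mul B)).const_mul _

namespace IsAdmissible

lemma abs_inv_bandwidth_le (hmin1 : 1 ≤ hmin) (hθ : θ.IsAdmissible hmin hmax B) :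
    |θ.bandwidth⁻¹| ≤ K := by
  have hh : 0 < θ.bandwidth :=
    (pos_of_le_mul_bandwidth (zero_lt_one.trans_le hmin1) hθ.mul_bandwidth_mem.1).2
  rw [abs_of_pos (inv_pos.2 hh), inv_le_iff_one_le_mul₀ hh]
  exact hmin1.trans hθ.mul_bandwidth_mem.1

lemma norm_coord_le (hmin1 : 1 ≤ hmin) (hB : 0 ≤ B) (hθ : θ.IsAdmissible hmin hmax B) :
    ‖θ.coord‖ ≤ K + B := by
  have hK : (1 : ℝ) ≤ K := by
    exact_mod_cast (pos_of_le_mul_bandwidth (zero_lt_one.trans_le hmin1) hθ.mul_bandwidth_mem.1).1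
  refine (pi_norm_le_iff_of_nonneg (by positivity)).2 ?_
  rintro (_ | ⟨k, j | s⟩)
  · exact (hθ.abs_inv_bandwidth_le hmin1).trans (le_add_of_nonneg_right hB)
  · have hcube := blockCl_subset_cube (hθ.centers_mem k) j
    simp only [coord, Real.norm_eq_abs, abs_of_nonneg hcube.1]
    linarith [hcube.2]
  · exact (hθ.abs_coeff_le k s s.2).trans (le_add_of_nonneg_left (by positivity))

variable [Nonempty (Fin p)]

lemma abs_eval_le (hφ : IsBoxedKernel φ) (hφpos : 0 < φ fun _ => 1 / hmin) (hmin1 : 1 ≤ hmin)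
    (hθ : θ.IsAdmissible hmin hmax B) {x : Fin p → ℝ} (hx : x ∈ cube p) :
    |θ.eval φ x| ≤ (mIdx p m).card * B :=
  abs_kmpFun_le hφ (hθ.kernelSum_pos hφ hφpos (zero_lt_one.trans_le hmin1) hx).ne'
    hθ.abs_coeff_le hx

lemma abs_eval_sub_le_envelope (hφ : IsBoxedKernel φ) (hφpos : 0 < φ fun _ => 1 / hmin)
    (hmin1 : 1 ≤ hmin) (hB : 0 ≤ B) (hθ : θ.IsAdmissible hmin hmax B)
    (hθ' : θ'.IsAdmissible hmin hmax B) (hδ : ‖θ.coord - θ'.coord‖ ≤ δ) {x : Fin p → ℝ}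
    (hx : x ∈ cube p) :
    |θ.eval φ x - θ'.eval φ x| ≤ θ'.envelope φ (φ fun _ => 1 / hmin) B δ x := by
  have hmin0 : 0 < hmin := zero_lt_one.trans_le hmin1
  have hcoord : ∀ i, |θ.coord i - θ'.coord i| ≤ δ := fun i =>
    (norm_le_pi_norm (θ.coord - θ'.coord) i).trans hδ
  refine abs_kmpFun_sub_le hφ hφpos
    (kernel_le_kernelSum hφ hmin0 hθ.mul_bandwidth_mem.1 hθ.centers_mem hx)
    (hθ'.kernelSum_pos hφ hφpos hmin0 hx) (fun k => ?_) hB hθ'.abs_coeff_le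
    (fun k s hs => hcoord (some (k, .inr ⟨s, hs⟩))) hx
  refine abs_scaledKernel_sub_le hφ hx (blockCl_subset_cube (hθ.centers_mem k)) (hcoord none)
    ?_ (hθ'.abs_inv_bandwidth_le hmin1)
  exact (pi_norm_le_iff_of_nonneg ((norm_nonneg _).trans hδ)).2 fun j => hcoord (some (k, .inl j))

variable {C : ℝ≥0} {ν : Measure (Fin p → ℝ)} [IsProbabilityMeasure ν]

lemma integral_envelope_le (hφ : IsBoxedKernel φ) (hν : ν ≤ C • volume.restrict (cube p))
    {κ : ℝ} (hκ : 0 < κ) (hmin1 : 1 ≤ hmin) (hB : 0 ≤ B) (hδ : 0 ≤ δ)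
    (hθ : θ.IsAdmissible hmin hmax B) :
    ∫ x, θ.envelope φ κ B δ x ∂ν
      ≤ (mIdx p m).card * (1 + B * (2 / κ * (p * (16 * C * hmax)))) * (δ * (K : ℝ) ^ p) := by
  obtain ⟨hK, hh⟩ :=
    pos_of_le_mul_bandwidth (zero_lt_one.trans_le hmin1) hθ.mul_bandwidth_mem.1
  have hK1 : (1 : ℝ) ≤ K := by exact_mod_cast hK
  have hKp : δ ≤ δ * (K : ℝ) ^ p := le_mul_of_one_le_right hδ (one_le_pow₀ hK1)
  have hbandwidth : ((K : ℝ) + 1) * θ.bandwidth ≤ 2 * hmax := by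
    nlinarith [hθ.mul_bandwidth_mem.2]
  have hInt := fun k => integrable_kernelEnvelope (η := δ * (K + 1)) (h := θ.bandwidth) (ν := ν) hφ
    (θ.centers k)
  have hkernel : ∀ k, ∫ x, kernelEnvelope φ (δ * (K + 1)) θ.bandwidth (θ.centers k) x ∂ν
      ≤ p * (16 * C * hmax) * δ := fun k =>
    calc ∫ x, kernelEnvelope φ (δ * (K + 1)) θ.bandwidth (θ.centers k) x ∂ν
        ≤ p * (8 * C * (δ * (K + 1) * θ.bandwidth)) :=
          integral_kernelEnvelope_le hφ hν (by positivity) hh _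
      _ ≤ p * (8 * C * (δ * (2 * hmax))) := by
          rw [mul_assoc δ]
          gcongr
      _ = p * (16 * C * hmax) * δ := by ring
  calc ∫ x, θ.envelope φ κ B δ x ∂ν
      = (mIdx p m).card * (δ + B * (2 / κ *
          ∑ k, ∫ x, kernelEnvelope φ (δ * (K + 1)) θ.bandwidth (θ.centers k) x ∂ν)) := by
        have hsum := integrable_finsetSum Finset.univ fun k _ => hInt k
        unfold envelope
        rw [integral_const_mul, integral_add (integrable_const δ)
          ((hsum.const_mul _).const_mul B), integral_const_mul, integral_const_mul,
          integral_finsetSum _ fun k _ => hInt k, integral_const, probReal_univ, one_smul]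
    _ ≤ (mIdx p m).card * (δ * (K : ℝ) ^ p + B * (2 / κ *
          ∑ _k : Fin p → Fin K, p * (16 * C * hmax) * δ)) := by
        gcongr with k
        exact hkernel k
    _ = (mIdx p m).card * (1 + B * (2 / κ * (p * (16 * C * hmax)))) * (δ * (K : ℝ) ^ p) := by
        rw [Finset.sum_const, Finset.card_univ, Fintype.card_pi_const, Fintype.card_fin,
          nsmul_eq_mul, Nat.cast_pow]
        ring

end IsAdmissible

lemma card_coord_index :
    Fintype.card (Option ((Fin p → Fin K) × (Fin p ⊕ mIdx p m)))
      = K ^ p * (p + (mIdx p m).card) + 1 := by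
  rw [Fintype.card_option, Fintype.card_prod, Fintype.card_sum, Fintype.card_pi_const,
    Fintype.card_fin, Fintype.card_fin, Fintype.card_coe]

end SieveParam

lemma exists_isBracketing_sieve [Nonempty (Fin p)] (hφ : IsBoxedKernel φ)
    (hφpos : 0 < φ fun _ => 1 / hmin) (hmin1 : 1 ≤ hmin) (hB : 0 ≤ B) {f₀ : (Fin p → ℝ) → ℝ}
    (hf₀ : ∀ x ∈ cube p, |f₀ x| ≤ B) {C : ℝ≥0} {ν : Measure (Fin p → ℝ)} [IsProbabilityMeasure ν]
    (hν : ν ≤ C • volume.restrict (cube p)) (hδ : 0 < δ) {N : ℕ} (hN : 2 * (K + B) / δ ≤ N) :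
    ∃ T, IsBracketing ν f₀ (cube p) (2 * ((mIdx p m).card * B) + B)
      ((mIdx p m).card * (1 + B * (2 / (φ fun _ => 1 / hmin) * (p * (16 * C * hmax)))) *
        (δ * (K : ℝ) ^ p))
      {f | memSieve φ m B hmin hmax K f} T ∧
      T.card ≤ (N + 1) ^ (K ^ p * (p + (mIdx p m).card) + 1) := by
  obtain ⟨t, htG, hcard, hcover⟩ := exists_finset_subset_forall_norm_sub_le
    (G := {θ : SieveParam p m K | θ.IsAdmissible hmin hmax B}) (v := SieveParam.coord) hδ
    (fun θ hθ => hθ.norm_coord_le hmin1 hB) hN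
  rw [SieveParam.card_coord_index] at hcard
  have hJ : 0 ≤ (mIdx p m).card * B := by positivity
  have hadm : ∀ θ ∈ t, θ.IsAdmissible hmin hmax B := fun θ hθ => htG hθ
  let radius (θ : SieveParam p m K) (x : Fin p → ℝ) : ℝ :=
    min (2 * ((mIdx p m).card * B)) (θ.envelope φ (φ fun _ => 1 / hmin) B δ x)
  have hradius : ∀ θ x, 0 ≤ radius θ x := fun θ x =>
    le_min (by positivity) (SieveParam.envelope_nonneg hφ hφpos.le hB hδ.le x)
  refine ⟨t.image fun θ => (θ.eval φ, radius θ), ⟨?_, ?_, ?_, ?_, ?_, ?_, ?_⟩,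
    Finset.card_image_le.trans hcard⟩
  all_goals simp only [Finset.forall_mem_image, Finset.exists_mem_image]
  · exact fun θ _ => SieveParam.measurable_eval hφ
  · exact fun θ _ => measurable_const.min (SieveParam.measurable_envelope hφ)
  · refine fun θ hθ x hx => (abs_sub _ _).trans (add_le_add ?_ (hf₀ x hx))
    linarith [(hadm θ hθ).abs_eval_le hφ hφpos hmin1 hx]
  · exact fun θ _ x _ => hradius θ x
  · exact fun θ _ x _ => (min_le_left _ _).trans (le_add_of_nonneg_right hB)
  · exact fun θ hθ => (integral_mono_of_nonneg (Eventually.of_forall (hradius θ))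
      (SieveParam.integrable_envelope hφ)
      (Eventually.of_forall fun x => min_le_right _ _)).trans
      ((hadm θ hθ).integral_envelope_le hφ hν hφpos hmin1 hB hδ.le)
  · intro f hf
    obtain ⟨θ, hθ, rfl⟩ := memSieve_iff.1 hf
    obtain ⟨θ', hθ', hclose⟩ := hcover θ hθ
    refine ⟨θ', hθ', fun x hx => le_min ((abs_sub _ _).trans ?_)
      (hθ.abs_eval_sub_le_envelope hφ hφpos hmin1 hB (hadm θ' hθ') hclose hx)⟩
    linarith [hθ.abs_eval_le hφ hφpos hmin1 hx, (hadm θ' hθ').abs_eval_le hφ hφpos hmin1 hx]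

end SieveBrackets

section Rate

open scoped Topology

variable {α : ℝ} {p n : ℕ}

/-- The real number `(n / log n)^{1/(2α+p)}` that `Kn` rounds up: the number of blocks per
coordinate at which the squared bias balances the log-cardinality of the sieve per observation. -/
def idealResolution (α : ℝ) (p n : ℕ) : ℝ := ((n : ℝ) / Real.log n) ^ (1 / (2 * α + p))

/-- The rate of convergence `ε_n = (log n / n)^{α/(2α+p)}`. -/
def rate (α : ℝ) (p n : ℕ) : ℝ := (Real.log n / n) ^ (α / (2 * α + p))

lemma div_log_nonneg (n : ℕ) : 0 ≤ (n : ℝ) / Real.log n :=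
  div_nonneg n.cast_nonneg (Real.log_natCast_nonneg n)

lemma rate_nonneg : 0 ≤ rate α p n :=
  Real.rpow_nonneg (div_nonneg (Real.log_natCast_nonneg n) n.cast_nonneg) _

lemma rate_eq_idealResolution_rpow_neg : rate α p n = idealResolution α p n ^ (-α) := by
  rw [rate, idealResolution, ← Real.rpow_mul (div_log_nonneg n), ← inv_div,
    Real.inv_rpow (div_log_nonneg n), ← Real.rpow_neg (div_log_nonneg n)]
  congr 1
  ring

lemma one_le_log_natCast (hn : 3 ≤ n) : 1 ≤ Real.log n := by
  have hn3 : (3 : ℝ) ≤ n := by exact_mod_cast hn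
  rw [Real.le_log_iff_exp_le (by linarith)]
  linarith [Real.exp_one_lt_d9]

lemma one_le_div_log (hn : 3 ≤ n) : 1 ≤ (n : ℝ) / Real.log n := by
  rw [one_le_div (zero_lt_one.trans_le (one_le_log_natCast hn))]
  exact Real.log_le_self n.cast_nonneg

lemma one_le_idealResolution (hα : 0 < α) (hn : 3 ≤ n) : 1 ≤ idealResolution α p n :=
  Real.one_le_rpow (one_le_div_log hn) (by positivity)

lemma mul_rate_sq (hα : 0 < α) (hn : 3 ≤ n) :
    n * rate α p n ^ 2 = idealResolution α p n ^ p * Real.log n := by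
  have hX : 0 < (n : ℝ) / Real.log n := zero_lt_one.trans_le (one_le_div_log hn)
  have hlog : Real.log n ≠ 0 := (zero_lt_one.trans_le (one_le_log_natCast hn)).ne'
  have hβ : 2 * α + p ≠ 0 := by positivity
  have hpow : (n : ℝ) / Real.log n * rate α p n ^ 2 = idealResolution α p n ^ p := by
    rw [rate_eq_idealResolution_rpow_neg, idealResolution, ← Real.rpow_natCast _ 2,
      ← Real.rpow_natCast _ p, ← Real.rpow_mul hX.le, ← Real.rpow_mul hX.le, ← Real.rpow_mul hX.le]
    nth_rw 1 [← Real.rpow_one ((n : ℝ) / Real.log n)]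
    rw [← Real.rpow_add hX]
    congr 1
    push_cast
    field_simp
    ring
  rw [← hpow]
  field_simp

lemma log_le_mul_rate_sq (hα : 0 < α) (hn : 3 ≤ n) : Real.log n ≤ n * rate α p n ^ 2 := by
  rw [mul_rate_sq hα hn]
  exact le_mul_of_one_le_left (Real.log_natCast_nonneg n)
    (one_le_pow₀ (one_le_idealResolution hα hn))

lemma inv_natCast_le_rate_sq (hα : 0 < α) (hn : 3 ≤ n) : (n : ℝ)⁻¹ ≤ rate α p n ^ 2 := by
  have hn0 : (0 : ℝ) < n := by positivity
  rw [inv_le_iff_one_le_mul₀' hn0]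
  exact (one_le_log_natCast hn).trans (log_le_mul_rate_sq hα hn)

lemma tendsto_mul_rate_sq_atTop (hα : 0 < α) (p : ℕ) :
    Tendsto (fun n : ℕ => n * rate α p n ^ 2) atTop atTop :=
  tendsto_atTop_mono' atTop ((eventually_ge_atTop 3).mono fun _ => log_le_mul_rate_sq hα)
    (Real.tendsto_log_atTop.comp tendsto_natCast_atTop_atTop)

lemma idealResolution_le_Kn : idealResolution α p n ≤ Kn α p n := Nat.le_ceil _

lemma Kn_pos (hα : 0 < α) (hn : 3 ≤ n) : 0 < Kn α p n :=
  Nat.ceil_pos.2 (zero_lt_one.trans_le (one_le_idealResolution hα hn))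

lemma Kn_le_two_mul_idealResolution (hα : 0 < α) (hn : 3 ≤ n) :
    (Kn α p n : ℝ) ≤ 2 * idealResolution α p n := by
  have hq := one_le_idealResolution (p := p) hα hn
  have hceil : (Kn α p n : ℝ) < idealResolution α p n + 1 :=
    Nat.ceil_lt_add_one (zero_le_one.trans hq)
  linarith

lemma Kn_le (hα : 0 < α) (hp : 0 < p) (hn : 3 ≤ n) : Kn α p n ≤ n := by
  have hp1 : (1 : ℝ) ≤ p := by exact_mod_cast hp
  refine Nat.ceil_le.2 ?_
  calc ((n : ℝ) / Real.log n) ^ (1 / (2 * α + p)) ≤ ((n : ℝ) / Real.log n) ^ (1 : ℝ) :=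
        Real.rpow_le_rpow_of_exponent_le (one_le_div_log hn)
          ((div_le_one (by positivity)).2 (by linarith))
    _ = n / Real.log n := Real.rpow_one _
    _ ≤ n := div_le_self n.cast_nonneg (one_le_log_natCast hn)

lemma Kn_rpow_neg_le_rate (hα : 0 < α) (hn : 3 ≤ n) : (Kn α p n : ℝ) ^ (-α) ≤ rate α p n := by
  rw [rate_eq_idealResolution_rpow_neg]
  exact Real.rpow_le_rpow_of_nonpos (zero_lt_one.trans_le (one_le_idealResolution hα hn))
    idealResolution_le_Kn (neg_nonpos.2 hα.le)

lemma Kn_pow_mul_log_le (hα : 0 < α) (hn : 3 ≤ n) :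
    (Kn α p n : ℝ) ^ p * Real.log n ≤ 2 ^ p * (n * rate α p n ^ 2) := by
  rw [mul_rate_sq hα hn, ← mul_assoc, ← mul_pow]
  have := Real.log_natCast_nonneg n
  gcongr
  exact Kn_le_two_mul_idealResolution hα hn

/-- A grid of mesh `n^{-(p+1)}` on parameters of size at most `n + B` has polynomially many
points. -/
lemma ceil_div_add_one_le {B : ℝ} {K : ℕ} (hB : 0 ≤ B) (hK : K ≤ n) (hn : 4 + 2 * B ≤ n) :
    (⌈2 * (K + B) / ((n : ℝ) ^ (p + 1))⁻¹⌉₊ + 1 : ℝ) ≤ (n : ℝ) ^ (p + 3) := by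
  have hKn : (K : ℝ) ≤ n := by exact_mod_cast hK
  have hpow : (1 : ℝ) ≤ (n : ℝ) ^ (p + 1) := one_le_pow₀ (by linarith)
  rw [div_inv_eq_mul]
  calc (⌈2 * (K + B) * (n : ℝ) ^ (p + 1)⌉₊ + 1 : ℝ)
      ≤ 2 * (K + B) * (n : ℝ) ^ (p + 1) + 1 + 1 := by
        gcongr
        exact (Nat.ceil_lt_add_one (by positivity)).le
    _ ≤ (2 * n + 2 * B + 2) * (n : ℝ) ^ (p + 1) := by nlinarith
    _ ≤ (n * n) * (n : ℝ) ^ (p + 1) := by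
        gcongr
        nlinarith
    _ = (n : ℝ) ^ (p + 3) := by ring

lemma pow_sieve_dimension_le (hα : 0 < α) (hn : 3 ≤ n) {N : ℝ} (hN : 0 ≤ N) {a : ℕ}
    (hNn : N ≤ (n : ℝ) ^ a) (D : ℕ) :
    N ^ (Kn α p n ^ p * D + 1) ≤ exp (a * (D + 1) * 2 ^ p * (n * rate α p n ^ 2)) := by
  have hn0 : (0 : ℝ) < n := by positivity
  have hKp : (1 : ℝ) ≤ (Kn α p n : ℝ) ^ p := one_le_pow₀ (by exact_mod_cast Kn_pos hα hn)
  have := Real.log_natCast_nonneg n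
  calc N ^ (Kn α p n ^ p * D + 1) ≤ ((n : ℝ) ^ a) ^ (Kn α p n ^ p * D + 1) := by gcongr
    _ = exp ((a * (Kn α p n ^ p * D + 1) : ℕ) * Real.log n) := by
        rw [← pow_mul, Real.exp_nat_mul, Real.exp_log hn0]
    _ ≤ exp (a * (D + 1) * 2 ^ p * (n * rate α p n ^ 2)) := by
        rw [exp_le_exp]
        push_cast
        calc (a * ((Kn α p n : ℝ) ^ p * D + 1)) * Real.log n
            ≤ (a * ((Kn α p n : ℝ) ^ p * D + (Kn α p n : ℝ) ^ p)) * Real.log n := by gcongr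
          _ = a * (D + 1) * ((Kn α p n : ℝ) ^ p * Real.log n) := by ring
          _ ≤ a * (D + 1) * (2 ^ p * (n * rate α p n ^ 2)) := by
              gcongr a * (D + 1) * ?_
              exact Kn_pow_mul_log_le hα hn
          _ = a * (D + 1) * 2 ^ p * (n * rate α p n ^ 2) := by ring

lemma inv_pow_mul_Kn_pow_le_rate_sq (hα : 0 < α) (hp : 0 < p) (hn : 3 ≤ n) :
    ((n : ℝ) ^ (p + 1))⁻¹ * (Kn α p n : ℝ) ^ p ≤ rate α p n ^ 2 := by
  have hKn : (Kn α p n : ℝ) ≤ n := by exact_mod_cast Kn_le hα hp hn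
  calc ((n : ℝ) ^ (p + 1))⁻¹ * (Kn α p n : ℝ) ^ p
      ≤ ((n : ℝ) ^ (p + 1))⁻¹ * (n : ℝ) ^ p := by gcongr
    _ = (n : ℝ)⁻¹ := by field_simp; ring
    _ ≤ rate α p n ^ 2 := inv_natCast_le_rate_sq hα hn

end Rate

section SieveRate

variable {p m K : ℕ} [Nonempty (Fin p)] {α B hmin hmax : ℝ} {φ f₀ : (Fin p → ℝ) → ℝ}

lemma abs_sub_le_of_memSieve (hφ : IsBoxedKernel φ) (hφpos : 0 < φ fun _ => 1 / hmin)
    (hmin1 : 1 ≤ hmin) (hB : 0 ≤ B) (hf₀ : ∀ x ∈ cube p, |f₀ x| ≤ B) {f : (Fin p → ℝ) → ℝ}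
    (hf : memSieve φ m B hmin hmax K f) {x : Fin p → ℝ} (hx : x ∈ cube p) :
    |f x - f₀ x| ≤ 2 * ((mIdx p m).card * B) + B := by
  obtain ⟨θ, hθ, rfl⟩ := memSieve_iff.1 hf
  have hJB : 0 ≤ (mIdx p m).card * B := by positivity
  linarith [abs_sub (θ.eval φ x) (f₀ x), hθ.abs_eval_le hφ hφpos hmin1 hx, hf₀ x hx]

lemma exists_eventually_memSieve_abs_sub_le (hα : 0 < α) (hf₀ : IsHolder p α B f₀)
    (hm : hOrder α ≤ m) (hφ : IsBoxedKernel φ) (hφpos : 0 < φ fun _ => 1 / hmin) (hmin0 : 0 < hmin)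
    (hh : hmin ≤ hmax) :
    ∃ a, ∀ᶠ n in atTop, ∃ g, memSieve φ m B hmin hmax (Kn α p n) g ∧ Measurable g ∧
      ∀ x ∈ cube p, |g x - f₀ x| ≤ a * rate α p n := by
  obtain ⟨L, hL, happrox⟩ := hf₀.exists_memSieve_abs_sub_le hα hm hφ hφpos hmin0 hh
  refine ⟨L, (eventually_ge_atTop 3).mono fun n hn => ?_⟩
  obtain ⟨g, hg, hgL⟩ := happrox (Kn α p n) (Kn_pos hα hn)
  obtain ⟨θ, -, rfl⟩ := memSieve_iff.1 hg
  exact ⟨_, hg, SieveParam.measurable_eval hφ, fun x hx => (hgL x hx).trans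
    (mul_le_mul_of_nonneg_left (Kn_rpow_neg_le_rate hα hn) hL)⟩

lemma exists_eventually_isBracketing_sieve (hα : 0 < α) (hφ : IsBoxedKernel φ)
    (hφpos : 0 < φ fun _ => 1 / hmin) (hmin1 : 1 ≤ hmin) (hh : hmin ≤ hmax) (hB : 0 ≤ B)
    (hf₀ : ∀ x ∈ cube p, |f₀ x| ≤ B) {C : ℝ≥0} {ν : Measure (Fin p → ℝ)} [IsProbabilityMeasure ν]
    (hν : ν ≤ C • volume.restrict (cube p)) :
    ∃ b, ∀ᶠ n : ℕ in atTop, ∃ T,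
      IsBracketing ν f₀ (cube p) (2 * ((mIdx p m).card * B) + B) (b * rate α p n ^ 2)
        {f | memSieve φ m B hmin hmax (Kn α p n) f} T ∧
      T.card ≤ exp (b * (n * rate α p n ^ 2)) := by
  set D := (mIdx p m).card * (1 + B * (2 / (φ fun _ => 1 / hmin) * (p * (16 * C * hmax)))) with hD
  have hhmax : 0 ≤ hmax := by linarith
  have hD0 : 0 ≤ D := by positivity
  set E : ℝ := (p + 3 : ℕ) * ((p + (mIdx p m).card : ℕ) + 1) * 2 ^ p with hE
  have hE0 : 0 ≤ E := by positivity
  refine ⟨D + E, ?_⟩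
  filter_upwards [eventually_ge_atTop 3, eventually_ge_atTop ⌈4 + 2 * B⌉₊] with n hn hnB
  have hn0 : (0 : ℝ) < n := by positivity
  have hp : 0 < p := Fin.pos_iff_nonempty.2 inferInstance
  obtain ⟨T, hT, hcard⟩ := exists_isBracketing_sieve (m := m) hφ hφpos hmin1 hB hf₀ hν
    (show 0 < ((n : ℝ) ^ (p + 1))⁻¹ by positivity) (Nat.le_ceil (2 * (Kn α p n + B) / _))
  refine ⟨T, hT.mono ?_, ?_⟩
  · calc D * (((n : ℝ) ^ (p + 1))⁻¹ * (Kn α p n : ℝ) ^ p) ≤ D * rate α p n ^ 2 := by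
          gcongr
          exact inv_pow_mul_Kn_pow_le_rate_sq hα hp hn
      _ ≤ (D + E) * rate α p n ^ 2 := by
          gcongr
          linarith
  · have hN := ceil_div_add_one_le (p := p) hB (Kn_le hα hp hn) (Nat.ceil_le.1 hnB)
    calc (T.card : ℝ) ≤ (⌈2 * (Kn α p n + B) / ((n : ℝ) ^ (p + 1))⁻¹⌉₊ + 1 : ℝ) ^
          (Kn α p n ^ p * (p + (mIdx p m).card) + 1) := by exact_mod_cast hcard
      _ ≤ exp (E * (n * rate α p n ^ 2)) := pow_sieve_dimension_le hα hn (by positivity) hN _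
      _ ≤ exp ((D + E) * (n * rate α p n ^ 2)) := by
          gcongr
          linarith

end SieveRate

section Model

open ProbabilityTheory

variable {p n : ℕ} {px f₀ : (Fin p → ℝ) → ℝ} {σ : ℝ}

/-- The law of the covariate: the distribution on the cube with Lebesgue density `px`. -/
def covariateLaw (p : ℕ) (px : (Fin p → ℝ) → ℝ) : Measure (Fin p → ℝ) :=
  (volume.restrict (cube p)).withDensity fun x => ENNReal.ofReal (px x)

lemma isProbabilityMeasure_covariateLaw (hpx0 : ∀ x ∈ cube p, 0 ≤ px x)
    (hpx1 : ∫ x in cube p, px x = 1) : IsProbabilityMeasure (covariateLaw p px) := by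
  have hInt : IntegrableOn px (cube p) :=
    not_imp_comm.1 integral_undef (by rw [hpx1]; exact one_ne_zero)
  refine ⟨?_⟩
  rw [covariateLaw, withDensity_apply _ MeasurableSet.univ, Measure.restrict_univ,
    ← ofReal_integral_eq_lintegral_ofReal hInt
      ((ae_restrict_iff' (measurableSet_cube p)).2 (.of_forall hpx0)), hpx1, ENNReal.ofReal_one]

lemma ae_mem_cube_covariateLaw : ∀ᵐ x ∂covariateLaw p px, x ∈ cube p :=
  withDensity_absolutelyContinuous _ _ (ae_restrict_mem (measurableSet_cube p))

lemma covariateLaw_le {C : ℝ} (hpxC : ∀ x ∈ cube p, px x ≤ C) :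
    covariateLaw p px ≤ C.toNNReal • volume.restrict (cube p) := by
  change _ ≤ (ENNReal.ofReal C) • volume.restrict (cube p)
  rw [← withDensity_const]
  refine withDensity_mono ((ae_restrict_iff' (measurableSet_cube p)).2 (.of_forall fun x hx => ?_))
  exact ENNReal.ofReal_le_ofReal (hpxC x hx)

lemma integral_covariateLaw (hpxm : Measurable px) (hpx0 : ∀ x ∈ cube p, 0 ≤ px x)
    (g : (Fin p → ℝ) → ℝ) : ∫ x, g x ∂covariateLaw p px = ∫ x in cube p, g x * px x := by
  rw [covariateLaw, integral_withDensity_eq_integral_toReal_smul hpxm.ennreal_ofReal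
    (.of_forall fun x => ENNReal.ofReal_lt_top)]
  refine setIntegral_congr_fun (measurableSet_cube p) fun x hx => ?_
  simp only [smul_eq_mul, ENNReal.toReal_ofReal (hpx0 x hx), mul_comm]

lemma le_sqrt_setIntegral_sq_sub_iff (hpxm : Measurable px) (hpx0 : ∀ x ∈ cube p, 0 ≤ px x) {t : ℝ}
    (ht : 0 ≤ t) (f : (Fin p → ℝ) → ℝ) :
    t ≤ √(∫ x in cube p, (f₀ x - f x) ^ 2 * px x) ↔
      t ^ 2 ≤ ∫ x, (f x - f₀ x) ^ 2 ∂covariateLaw p px := by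
  rw [← integral_covariateLaw hpxm hpx0, Real.le_sqrt ht (integral_nonneg fun _ => sq_nonneg _)]
  simp only [sub_sq_comm]

lemma gaussD_eq_gaussianPDFReal (hσ : 0 < σ) (t : ℝ) :
    gaussD σ t = gaussianPDFReal 0 (σ ^ 2).toNNReal t := by
  rw [gaussD, gaussianPDFReal, sub_zero, Real.coe_toNNReal _ (sq_nonneg σ), mul_comm (2 * π),
    Real.sqrt_mul (sq_nonneg σ), Real.sqrt_sq hσ.le]

lemma trueMeas_eq_regressionMeasure (hpxm : Measurable px) (hf₀ : Measurable f₀)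
    (hpx0 : ∀ x ∈ cube p, 0 ≤ px x) (hσ : 0 < σ) :
    trueMeas p px f₀ σ = regressionMeasure (covariateLaw p px) f₀ (σ ^ 2).toNNReal := by
  have hv : (σ ^ 2).toNNReal ≠ 0 := by simpa using hσ.ne'
  have hpx : Measurable ((cube p).indicator px) := hpxm.indicator (measurableSet_cube p)
  have hgauss : Measurable (gaussD σ) := by
    unfold gaussD
    fun_prop
  have : SFinite (covariateLaw p px) := by
    unfold covariateLaw
    infer_instance
  refine Measure.ext_of_lintegral _ fun F hF => ?_
  have hprod : Measurable fun x => ∫⁻ z, F (x, f₀ x + z) ∂gaussianReal 0 (σ ^ 2).toNNReal :=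
    (hF.comp (measurable_regressionMap hf₀)).lintegral_prod_right'
  rw [lintegral_regressionMeasure hf₀ hF, trueMeas, covariateLaw,
    lintegral_withDensity_eq_lintegral_mul _ (by fun_prop) hF,
    lintegral_withDensity_eq_lintegral_mul _ hpxm.ennreal_ofReal hprod, Measure.volume_eq_prod,
    lintegral_prod _ (by fun_prop), ← lintegral_indicator (measurableSet_cube p)]
  refine lintegral_congr fun x => ?_
  by_cases hx : x ∈ cube p
  swap
  · simp [hx]
  have hFx : Measurable fun z => F (x, f₀ x + z) := by fun_prop
  simp only [Pi.mul_apply, Set.indicator_of_mem hx]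
  rw [gaussianReal_of_var_ne_zero _ hv,
    lintegral_withDensity_eq_lintegral_mul _ (measurable_gaussianPDF _ _) hFx,
    ← lintegral_add_left_eq_self _ (f₀ x),
    ← lintegral_const_mul _ ((measurable_gaussianPDF _ _).mul hFx)]
  refine lintegral_congr fun z => ?_
  rw [Pi.mul_apply, gaussianPDF, add_sub_cancel_left, gaussD_eq_gaussianPDFReal hσ,
    ENNReal.ofReal_mul (hpx0 x hx), mul_assoc]

lemma log_gaussD (hσ : 0 < σ) (t : ℝ) :
    Real.log (gaussD σ t) = Real.log (σ * Real.sqrt (2 * π))⁻¹ - t ^ 2 / (2 * σ ^ 2) := by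
  rw [gaussD, Real.log_mul (by positivity) (exp_ne_zero _), Real.log_exp]
  ring

lemma sum_log_gaussD_le_iff {𝓧 : Type*} (hσ : 0 < σ) (d : Fin n → 𝓧 × ℝ) (f g : 𝓧 → ℝ) :
    ∑ i, Real.log (gaussD σ ((d i).2 - g (d i).1)) ≤
        ∑ i, Real.log (gaussD σ ((d i).2 - f (d i).1)) ↔
      residualSS f d ≤ residualSS g d := by
  simp only [log_gaussD hσ, Finset.sum_sub_distrib, ← Finset.sum_div, sub_le_sub_iff_left,
    residualSS]
  exact div_le_div_iff_of_pos_right (by positivity)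

end Model

theorem statement12_general {p m : ℕ} (hp : 0 < p) (α B : ℝ) (hα : 0 < α) (hB : 0 < B)
    (hm : hOrder α ≤ m) (hmin hmax : ℝ) (hh1 : 1 ≤ hmin) (hh2 : hmin ≤ hmax)
    (σ₀ : ℝ) (hσ₀ : 0 < σ₀)
    (φ : (Fin p → ℝ) → ℝ) (hφ : IsBoxedKernel φ) (hφpos : 0 < φ fun _ => 1 / hmin)
    (f₀ : (Fin p → ℝ) → ℝ) (hf₀ : IsHolder p α B f₀)
    (px : (Fin p → ℝ) → ℝ) (hpxm : Measurable px)
    (C : ℝ) (hpxb : ∀ x ∈ cube p, 0 ≤ px x ∧ px x ≤ C)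
    (hpx1 : (∫ x in cube p, px x) = 1) :
    ∃ M : ℝ, 0 < M ∧
      Filter.Tendsto (fun n : ℕ =>
          Measure.pi (fun _ : Fin n => trueMeas p px f₀ σ₀)
            {d : Fin n → (Fin p → ℝ) × ℝ | ∃ f : (Fin p → ℝ) → ℝ,
              memSieve φ m B hmin hmax (Kn α p n) f ∧
              (∀ g : (Fin p → ℝ) → ℝ, memSieve φ m B hmin hmax (Kn α p n) g →
                (∑ i, Real.log (gaussD σ₀ ((d i).2 - g (d i).1))) ≤
                  ∑ i, Real.log (gaussD σ₀ ((d i).2 - f (d i).1))) ∧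
              M * (Real.log n / n) ^ (α / (2 * α + p)) ≤
                Real.sqrt (∫ x in cube p, (f₀ x - f x) ^ 2 * px x)})
        Filter.atTop (nhds 0) := by
  have : Nonempty (Fin p) := Fin.pos_iff_nonempty.1 hp
  have hpx0 : ∀ x ∈ cube p, 0 ≤ px x := fun x hx => (hpxb x hx).1
  have := isProbabilityMeasure_covariateLaw hpx0 hpx1
  have hf₀m : Measurable f₀ := hf₀.1.continuous.measurable
  have hf₀B : ∀ x ∈ cube p, |f₀ x| ≤ B := fun x => hf₀.abs_le
  obtain ⟨a, happrox⟩ := exists_eventually_memSieve_abs_sub_le hα hf₀ hm hφ hφpos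
    (zero_lt_one.trans_le hh1) hh2
  obtain ⟨b, hbracket⟩ := exists_eventually_isBracketing_sieve (m := m) hα hφ hφpos hh1 hh2 hB.le
    hf₀B (covariateLaw_le fun x hx => (hpxb x hx).2)
  obtain ⟨M, hM, hlim⟩ := exists_tendsto_measure_pi_isLeastSquares (v := (σ₀ ^ 2).toNNReal)
    (𝓕 := fun n => {f | memSieve φ m B hmin hmax (Kn α p n) f}) hf₀m
    (by simpa using hσ₀.ne') (by positivity) ae_mem_cube_covariateLaw
    (tendsto_mul_rate_sq_atTop hα p)
    (.of_forall fun n f hf x => abs_sub_le_of_memSieve hφ hφpos hh1 hB.le hf₀B hf)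
    happrox hbracket
  refine ⟨M, hM, hlim.congr fun n => ?_⟩
  have hthreshold : 0 ≤ M * (Real.log n / n) ^ (α / (2 * α + p)) := mul_nonneg hM.le rate_nonneg
  rw [trueMeas_eq_regressionMeasure hpxm hf₀m hpx0 hσ₀]
  simp only [IsLeastSquares, Set.mem_ofPred_eq, and_assoc, sum_log_gaussD_le_iff hσ₀, rate,
    le_sqrt_setIntegral_sq_sub_iff hpxm hpx0 hthreshold]

/-- Convergence rate of the sieve maximum likelihood estimator: with
`K_n = ⌈(n/log n)^{1/(2α+p)}⌉`, the probability that some maximizer of the likelihood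
over the sieve `G_{K_n}` is at `L₂(P_x)`-distance at least `M (log n/n)^{α/(2α+p)}`
from the α-Hölder truth `f₀` tends to `0`. -/
theorem statement12 {p m : ℕ} (hp : 0 < p) (α B : ℝ) (hα : 0 < α) (hB : 0 < B)
    (hm : α ≤ (m : ℝ)) (hmin hmax : ℝ) (hh1 : 1 < hmin) (hh2 : hmin < hmax)
    (σ₀ : ℝ) (hσ₀ : 0 < σ₀)
    (φ : (Fin p → ℝ) → ℝ) (hφ : IsBoxedKernel φ)
    (hφpos : ∀ u : Fin p → ℝ, ‖u‖ < 1 → 0 < φ u)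
    (f₀ : (Fin p → ℝ) → ℝ) (hf₀ : IsHolder p α B f₀)
    (px : (Fin p → ℝ) → ℝ) (hpxm : Measurable px)
    (c C : ℝ) (hc : 0 < c) (hpxb : ∀ x ∈ cube p, c ≤ px x ∧ px x ≤ C)
    (hpx1 : (∫ x in cube p, px x) = 1) :
    ∃ M : ℝ, 0 < M ∧
      Filter.Tendsto (fun n : ℕ =>
          Measure.pi (fun _ : Fin n => trueMeas p px f₀ σ₀)
            {d : Fin n → (Fin p → ℝ) × ℝ | ∃ f : (Fin p → ℝ) → ℝ,
              memSieve φ m B hmin hmax (Kn α p n) f ∧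
              (∀ g : (Fin p → ℝ) → ℝ, memSieve φ m B hmin hmax (Kn α p n) g →
                (∑ i, Real.log (gaussD σ₀ ((d i).2 - g (d i).1))) ≤
                  ∑ i, Real.log (gaussD σ₀ ((d i).2 - f (d i).1))) ∧
              M * (Real.log n / n) ^ (α / (2 * α + p)) ≤
                Real.sqrt (∫ x in cube p, (f₀ x - f x) ^ 2 * px x)})
        Filter.atTop (nhds 0) := by
  have hnorm : ‖fun _ : Fin p => 1 / hmin‖ < 1 := (pi_norm_lt_iff one_pos).2 fun _ => by
    rw [Real.norm_of_nonneg (by positivity)]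
    exact (div_lt_one (by positivity)).2 hh1
  exact statement12_general hp α B hα hB (by exact_mod_cast (hOrder_lt hα).le.trans hm) hmin hmax
    hh1.le hh2.le σ₀ hσ₀ φ hφ (hφpos _ hnorm) f₀ hf₀ px hpxm C
    (fun x hx => ⟨hc.le.trans (hpxb x hx).1, (hpxb x hx).2⟩) hpx1

end KMP
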